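/- arXiv:1403.7342 — 3 statements merged into one kernel-verified Lean document; each statement's English description precedes it below -/
import Mathlib

section
/- Let ψ : P⁻¹ℤ → ℝ_{≥0} satisfy ψ(γ) ≤ 1/(2 L(γ)) for all γ, and suppose that the sum Σ_{γ ∈ P⁻¹ℤ} φ(n) ψ(γ)^{r+1} / n converges (where γ = n p_1^{ν_1} ⋯ p_r^{ν_r} and φ is Euler's totient function). Then the set 𝒜(ψ) = { x ∈ ℤ_P : d(γ·x, ι(β)) < ψ(γ) for infinitely many coprime pairs β, γ ∈ P⁻¹ℤ } has measure λ(𝒜(ψ)) = 0. -/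
open MeasureTheory Filter Set

noncomputable section

/-- Borel measurable structure on `ℚ_[q]`. -/
instance (q : ℕ) [Fact q.Prime] : MeasurableSpace ℚ_[q] := borel _
instance (q : ℕ) [Fact q.Prime] : BorelSpace ℚ_[q] := ⟨rfl⟩

/-- The normalized Haar measure on `ℚ_[q]`, giving the unit ball `ℤ_[q]` measure 1. -/
def padicHaar (q : ℕ) [Fact q.Prime] : Measure ℚ_[q] :=
  Measure.addHaarMeasure
    ⟨⟨Metric.closedBall 0 1, isCompact_closedBall 0 1⟩,
      ⟨0, mem_interior_iff_mem_nhds.2 (Metric.closedBall_mem_nhds 0 one_pos)⟩⟩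

variable (r : ℕ) (p : Fin r → ℕ) [∀ i, Fact (p i).Prime]

/-- The space `ℚ_P = ℝ × ℚ_{p_1} × ⋯ × ℚ_{p_r}`. -/
abbrev QP : Type := ℝ × ((i : Fin r) → ℚ_[p i])

/-- `P⁻¹ℤ = { n p_1^{ν_1} ⋯ p_r^{ν_r} : n, ν_i ∈ ℤ }`, as a set of rationals. -/
def PinvZ : Set ℚ :=
  {q : ℚ | ∃ (n : ℤ) (ν : Fin r → ℤ), q = (n : ℚ) * ∏ i, (p i : ℚ) ^ (ν i)}

/-- The diagonal embedding `ι : ℚ → ℚ_P`. -/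
def iota (q : ℚ) : QP r p := ((q : ℝ), fun i => (q : ℚ_[p i]))

/-- Coordinatewise multiplication of `x ∈ ℚ_P` by a rational number `γ`. -/
def smulQ (γ : ℚ) (x : QP r p) : QP r p :=
  ((γ : ℝ) * x.1, fun i => (γ : ℚ_[p i]) * x.2 i)

/-- The distance `d(x,y) = max_{p ∈ P} |x_p - y_p|_p` on `ℚ_P`. -/
def dP (x y : QP r p) : ℝ :=
  max |x.1 - y.1| (⨆ i, ‖x.2 i - y.2 i‖)

/-- The level `ℓ(γ) = max_{p ∈ P} |γ|_p` of a rational number `γ`. -/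
def lev (γ : ℚ) : ℝ :=
  max |(γ : ℝ)| (⨆ i, ‖(γ : ℚ_[p i])‖)

/-- `L(γ) = max_{p ∈ P} (|γ|_∞ |γ|_{p_1} ⋯ |γ|_{p_r}) / |γ|_p` (which equals
`max_{p ∈ P} n/|γ|_p` for `γ = n p_1^{ν_1} ⋯ p_r^{ν_r}` with `n ∈ ℕ` coprime to the `p i`). -/
def LP (γ : ℚ) : ℝ :=
  max ((|(γ : ℝ)| * ∏ i, ‖(γ : ℚ_[p i])‖) / |(γ : ℝ)|)
    (⨆ i, (|(γ : ℝ)| * ∏ j, ‖(γ : ℚ_[p j])‖) / ‖(γ : ℚ_[p i])‖)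

/-- The fundamental domain `ℤ_P = [0,1) × ℤ_{p_1} × ⋯ × ℤ_{p_r}`. -/
def ZP : Set (QP r p) :=
  {x : QP r p | x.1 ∈ Set.Ico (0 : ℝ) 1 ∧ ∀ i, ‖x.2 i‖ ≤ 1}

/-- The measure `λ` on `ℚ_P`: the product of Lebesgue measure on `ℝ` and the
normalized Haar measures on the `ℚ_{p_i}`. -/
def lamP : Measure (QP r p) :=
  (volume : Measure ℝ).prod (Measure.pi fun i => padicHaar (p i))

/-- Two elements of `P⁻¹ℤ` are coprime if they admit decompositions
`β = m p_1^{μ_1} ⋯ p_r^{μ_r}`, `γ = n p_1^{ν_1} ⋯ p_r^{ν_r}` with `m, n` coprime to all the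
`p i` and `gcd(m,n) = 1`. -/
def CoprimePair (β γ : ℚ) : Prop :=
  ∃ (m n : ℤ) (μ ν : Fin r → ℤ),
    β = (m : ℚ) * ∏ i, (p i : ℚ) ^ (μ i) ∧
    γ = (n : ℚ) * ∏ i, (p i : ℚ) ^ (ν i) ∧
    (∀ i, ¬ ((p i : ℤ) ∣ m)) ∧ (∀ i, ¬ ((p i : ℤ) ∣ n)) ∧ IsCoprime m n

/-- For nonzero `γ = n p_1^{ν_1} ⋯ p_r^{ν_r} ∈ P⁻¹ℤ` with `n ∈ ℕ` coprime to the `p i`,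
`unitPart γ = n`: the positive integer obtained from `γ` by removing all powers of the `p i`. -/
def unitPart (γ : ℚ) : ℕ :=
  (γ.num.natAbs * γ.den) / ∏ i, (p i) ^ ((γ.num.natAbs * γ.den).factorization (p i))

/-- The summand `φ(n) ψ(γ)^{r+1} / n`, where `γ = n p_1^{ν_1} ⋯ p_r^{ν_r}` with `n ∈ ℕ`
coprime to the `p i` and `φ` is Euler's totient function. -/
def dsWeight (ψ : ℚ → ℝ) (γ : ℚ) : ℝ :=
  (Nat.totient (unitPart r p γ) : ℝ) * ψ γ ^ (r + 1) / (unitPart r p γ : ℝ)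

/-- The set `𝒜(ψ)` of `x ∈ ℤ_P` such that `d(γ·x, ι(β)) < ψ(γ)` for infinitely many coprime
pairs `β, γ ∈ P⁻¹ℤ`. -/
def Apsi (ψ : ℚ → ℝ) : Set (QP r p) :=
  {x : QP r p | x ∈ ZP r p ∧
    {bg : ℚ × ℚ | bg.1 ∈ PinvZ r p ∧ bg.2 ∈ PinvZ r p ∧ CoprimePair r p bg.1 bg.2 ∧
      dP r p (smulQ r p bg.2 x) (iota r p bg.1) < ψ bg.2}.Infinite}

/-- The set `ℰ(ψ)` of `x ∈ ℤ_P` such that `d(γ·x, ι(β)) ≤ ψ(γ)` for infinitely many coprime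
pairs `β, γ ∈ P⁻¹ℤ`. -/
def Epsi (ψ : ℚ → ℝ) : Set (QP r p) :=
  {x : QP r p | x ∈ ZP r p ∧
    {bg : ℚ × ℚ | bg.1 ∈ PinvZ r p ∧ bg.2 ∈ PinvZ r p ∧ CoprimePair r p bg.1 bg.2 ∧
      dP r p (smulQ r p bg.2 x) (iota r p bg.1) ≤ ψ bg.2}.Infinite}

/-- The union of boxes
`⋃_{a=1, (a,m)=1}^{m} B_∞(a/m, ρ/(m p_1^{μ_1} ⋯ p_r^{μ_r})) × ∏_i B_{p_i}(a/m, p_i^{μ_i} ρ)`,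
associated to `β = m p_1^{μ_1} ⋯ p_r^{μ_r}` and radius parameter `ρ = ψ(β)`. -/
def Abox (m : ℕ) (μ : Fin r → ℤ) (ρ : ℝ) : Set (QP r p) :=
  ⋃ a ∈ Finset.filter (fun a => Nat.Coprime a m) (Finset.Icc 1 m),
    {x : QP r p |
      x.1 ∈ Metric.ball ((a : ℝ) / (m : ℝ)) (ρ / ((m : ℝ) * ∏ i, (p i : ℝ) ^ (μ i))) ∧
      ∀ i, x.2 i ∈ Metric.ball ((((a : ℚ) / (m : ℚ)) : ℚ_[p i])) ((p i : ℝ) ^ (μ i) * ρ)}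

/-- A box in `ℚ_P`: a product of a ball from each of the constituent spaces. -/
def IsBox (S : Set (QP r p)) : Prop :=
  ∃ (c : ℝ) (ρ : ℝ) (cp : (i : Fin r) → ℚ_[p i]) (ρp : Fin r → ℝ),
    S = {x : QP r p | x.1 ∈ Metric.ball c ρ ∧ ∀ i, x.2 i ∈ Metric.ball (cp i) (ρp i)}

end

/-!
The proof unfolds the sum over `β`. Write `γ = n p_1^{ν_1} ⋯ p_r^{ν_r}` and `u = |n|`. Every `β`
coprime to `γ` is `γ (a/u + k)` with `0 ≤ a < u`, `gcd(a, u) = 1` and `k ∈ P⁻¹ℤ`, and replacing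
`k` by `k + l` translates `{x : d(γ·x, ι(β)) < ψ(γ)}` by `ι(l)`. The translates of `ℤ_P` by `P⁻¹ℤ`
are pairwise disjoint: an element of `P⁻¹ℤ` integral at every `p_i` is an integer. Hence for fixed
`a` the sum over `k` of the measures of the traces on `ℤ_P` is at most the measure of one such set,
which by the product formula is at most `2 ψ(γ)^{r+1} / u`. There are `φ(u)` choices of `a`, so the
Borel–Cantelli lemma applies.
-/

namespace DuffinSchaeffer

section PadicHaar

open Metric

variable {q : ℕ} [hq : Fact q.Prime]

instance : (padicHaar q).IsAddHaarMeasure :=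
  inferInstanceAs (Measure.addHaarMeasure _).IsAddHaarMeasure

lemma closedBall_zero_one_eq_biUnion_ball :
    closedBall (0 : ℚ_[q]) 1 = ⋃ a ∈ Finset.range q, ball (a : ℚ_[q]) 1 := by
  ext x
  simp only [mem_closedBall_zero_iff, mem_iUnion, Finset.mem_range, exists_prop, mem_ball,
    dist_eq_norm]
  constructor
  · intro hx
    obtain ⟨a, ha, hxa⟩ := PadicInt.exists_mem_range (⟨x, hx⟩ : ℤ_[q])
    exact ⟨a, ha, PadicInt.mem_nonunits.1 hxa⟩
  · rintro ⟨a, -, hxa⟩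
    rw [← sub_add_cancel x a]
    exact (Padic.nonarchimedean _ _).trans (max_le hxa.le (Padic.norm_int_le_one a))

lemma pairwiseDisjoint_ball_natCast :
    (Finset.range q : Set ℕ).PairwiseDisjoint fun a => ball (a : ℚ_[q]) 1 := by
  intro a ha b hb hab
  rw [Finset.coe_range, mem_Iio] at ha hb
  refine (IsUltrametricDist.ball_eq_or_disjoint (a : ℚ_[q]) b 1).resolve_left fun h => hab ?_
  have hdist : ‖((a - b : ℤ) : ℚ_[q])‖ < 1 := by
    have : (a : ℚ_[q]) ∈ ball (b : ℚ_[q]) 1 := h ▸ mem_ball_self one_pos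
    simpa [dist_eq_norm] using this
  have hdvd := Padic.norm_intCast_lt_one_iff.1 hdist
  have := Int.eq_zero_of_abs_lt_dvd hdvd (by rw [abs_lt]; omega)
  omega

lemma measure_closedBall_zero_one (μ : Measure ℚ_[q]) [μ.IsAddLeftInvariant] :
    μ (closedBall 0 1) = q * μ (ball 0 1) := by
  have htranslate (a : ℚ_[q]) : μ (ball a 1) = μ (ball 0 1) := by
    simpa using! (measure_preimage_add μ (-a) (ball 0 1))
  rw [closedBall_zero_one_eq_biUnion_ball, measure_biUnion_finset pairwiseDisjoint_ball_natCast
    fun _ _ => measurableSet_ball]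
  simp [htranslate]

lemma measure_closedBall_zero_zpow (μ : Measure ℚ_[q]) [μ.IsAddLeftInvariant] (k : ℤ) :
    μ (closedBall 0 ((q : ℝ) ^ k)) = q * μ (ball 0 ((q : ℝ) ^ k)) := by
  have hq0 : (q : ℚ_[q]) ≠ 0 := mod_cast hq.out.ne_zero
  have hpos : (0 : ℝ) < (q : ℝ) ^ k := zpow_pos (mod_cast hq.out.pos) k
  let scale : ℚ_[q] →+ ℚ_[q] := AddMonoidHom.mulLeft ((q : ℚ_[q]) ^ k)
  have hscale : Measurable scale := (continuous_const_mul ((q : ℚ_[q]) ^ k)).measurable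
  have hnorm (x : ℚ_[q]) : ‖scale x‖ = ((q : ℝ) ^ k)⁻¹ * ‖x‖ := by
    simp [scale, norm_mul]
  have hclosed : scale ⁻¹' closedBall (0 : ℚ_[q]) 1 = closedBall 0 ((q : ℝ) ^ k) := by
    ext x
    simp [hnorm, inv_mul_le_iff₀ hpos]
  have hopen : scale ⁻¹' ball (0 : ℚ_[q]) 1 = ball 0 ((q : ℝ) ^ k) := by
    ext x
    simp [hnorm, inv_mul_lt_iff₀ hpos]
  have : (μ.map scale).IsAddLeftInvariant :=
    isAddLeftInvariant_map scale.toAddHom hscale (mul_left_surjective₀ (zpow_ne_zero k hq0))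
  have h := measure_closedBall_zero_one (μ.map scale)
  rwa [Measure.map_apply hscale measurableSet_closedBall,
    Measure.map_apply hscale measurableSet_ball, hclosed, hopen] at h

lemma ball_zero_zpow_succ (k : ℤ) :
    ball (0 : ℚ_[q]) ((q : ℝ) ^ (k + 1)) = closedBall 0 ((q : ℝ) ^ k) := by
  ext x
  rw [mem_ball_zero_iff, mem_closedBall_zero_iff, Padic.norm_le_pow_iff_norm_lt_pow_add_one]

lemma padicHaar_closedBall_zero_one : padicHaar q (closedBall 0 1) = 1 :=
  Measure.addHaarMeasure_self

lemma padicHaar_closedBall_zero_zpow (k : ℤ) :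
    padicHaar q (closedBall 0 ((q : ℝ) ^ k)) = ENNReal.ofReal ((q : ℝ) ^ k) := by
  have hq0 : (q : ENNReal) ≠ 0 := mod_cast hq.out.ne_zero
  have hmeasure (k : ℤ) : padicHaar q (closedBall 0 ((q : ℝ) ^ (k + 1))) =
      q * padicHaar q (closedBall 0 ((q : ℝ) ^ k)) := by
    rw [measure_closedBall_zero_zpow, ball_zero_zpow_succ]
  have hradius (k : ℤ) :
      ENNReal.ofReal ((q : ℝ) ^ (k + 1)) = q * ENNReal.ofReal ((q : ℝ) ^ k) := by
    rw [zpow_add_one₀ (mod_cast hq.out.ne_zero), mul_comm, ENNReal.ofReal_mul q.cast_nonneg,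
      ENNReal.ofReal_natCast]
  induction k using Int.induction_on with
  | zero => simpa using padicHaar_closedBall_zero_one
  | succ k ih => rw [hmeasure, hradius, ih]
  | pred k ih =>
    rw [← sub_add_cancel (-(k : ℤ)) 1, hmeasure, hradius] at ih
    exact (ENNReal.mul_right_inj hq0 (ENNReal.natCast_ne_top q)).1 ih

lemma padicHaar_ball_le (c : ℚ_[q]) (ρ : ℝ) : padicHaar q (ball c ρ) ≤ ENNReal.ofReal ρ := by
  rcases le_or_gt ρ 0 with hρ | hρ
  · simp [ball_eq_empty.2 hρ]
  obtain ⟨k, hk, hk'⟩ := exists_mem_Ioc_zpow hρ (mod_cast hq.out.one_lt : (1 : ℝ) < q)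
  calc padicHaar q (ball c ρ) = padicHaar q (ball 0 ρ) := Measure.addHaar_ball_center _ _ _
    _ ≤ padicHaar q (ball 0 ((q : ℝ) ^ (k + 1))) := measure_mono (ball_subset_ball hk')
    _ = ENNReal.ofReal ((q : ℝ) ^ k) := by
      rw [ball_zero_zpow_succ, padicHaar_closedBall_zero_zpow]
    _ ≤ ENNReal.ofReal ρ := ENNReal.ofReal_le_ofReal hk.le

end PadicHaar

lemma tsum_measure_inter_translate_le {G K : Type*} [AddGroup G] [MeasurableSpace G]
    [MeasurableAdd G] (μ : Measure G) [μ.IsAddLeftInvariant] {s : Set G} (hs : MeasurableSet s)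
    (t : Set G) (v : K → G) (hdisj : ∀ ⦃k l x⦄, v k + x ∈ s → v l + x ∈ s → k = l) :
    ∑' k, μ (s ∩ (fun x => -v k + x) ⁻¹' t) ≤ μ t := by
  have hmeas (k : K) : MeasurableSet ((fun x => v k + x) ⁻¹' s) :=
    hs.preimage (measurable_const_add _)
  have hterm (k : K) :
      μ (s ∩ (fun x => -v k + x) ⁻¹' t) = μ.restrict t ((fun x => v k + x) ⁻¹' s) := by
    rw [Measure.restrict_apply (hmeas k),
      ← measure_preimage_add μ (v k), preimage_inter, preimage_preimage]
    simp
  calc ∑' k, μ (s ∩ (fun x => -v k + x) ⁻¹' t)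
      = ∑' k, μ.restrict t ((fun x => v k + x) ⁻¹' s) := tsum_congr hterm
    _ ≤ μ.restrict t univ := tsum_measure_le_measure_univ (fun k => (hmeas k).nullMeasurableSet)
        fun k l hkl => (disjoint_left.2 fun x hk hl => hkl (hdisj hk hl)).aedisjoint
    _ = μ t := Measure.restrict_apply_univ t

lemma prod_zpow_eq_div {ι G : Type*} [DivisionCommMonoid G] (s : Finset ι) (x : ι → G)
    (ν : ι → ℤ) :
    ∏ i ∈ s, x i ^ ν i = (∏ i ∈ s, x i ^ (ν i).toNat) / ∏ i ∈ s, x i ^ (-ν i).toNat := by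
  rw [← Finset.prod_div_distrib]
  refine Finset.prod_congr rfl fun i _ => ?_
  obtain ⟨k, hk | hk⟩ := (ν i).eq_nat_or_neg <;> simp [hk]

lemma exists_eq_mul_add_mul_of_isCoprime {u : ℕ} [NeZero u] {b D : ℤ} (hb : IsCoprime b u)
    (hD : IsCoprime D u) : ∃ a < u, u.Coprime a ∧ ∃ t : ℤ, b = a * D + u * t := by
  obtain ⟨s, w, hsw⟩ := hD
  have hu : (u : ℤ) ≠ 0 := mod_cast NeZero.ne u
  obtain ⟨a, ha⟩ := Int.eq_ofNat_of_zero_le (Int.emod_nonneg (b * s) hu)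
  have hau : (a : ℤ) < u := ha ▸ Int.emod_lt_of_pos _ (by positivity)
  have hbt : b = a * D + u * (b * s / u * D + b * w) := by
    linear_combination (-b) * hsw - D * Int.mul_ediv_add_emod (b * s) u + D * ha
  refine ⟨a, mod_cast hau, ?_, _, hbt⟩
  rw [hbt] at hb
  exact (Nat.isCoprime_iff_coprime.1 (IsCoprime.of_mul_left_left hb.of_add_mul_left_left)).symm

lemma exists_div_mul_eq_add {b n D : ℤ} (hn : n ≠ 0) (hD0 : D ≠ 0) (hb : IsCoprime b n)
    (hD : IsCoprime D n) :
    ∃ a < n.natAbs, n.natAbs.Coprime a ∧ ∃ t : ℤ, (b / (n * D) : ℚ) = a / n.natAbs + t / D := by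
  have : NeZero n.natAbs := ⟨Int.natAbs_ne_zero.2 hn⟩
  have hsign : IsUnit n.sign := Int.isUnit_iff_natAbs_eq.2 (Int.natAbs_sign_of_ne_zero hn)
  have hcop {x : ℤ} (hx : IsCoprime x n) : IsCoprime x n.natAbs := by
    rwa [Int.natCast_natAbs, IsCoprime.abs_right_iff]
  obtain ⟨a, hau, ha, t, hat⟩ := exists_eq_mul_add_mul_of_isCoprime
    ((isCoprime_mul_unit_left_left hsign _ _).2 (hcop hb)) (hcop hD)
  refine ⟨a, hau, ha, t, ?_⟩
  have hatQ : (n.sign * b : ℚ) = a * D + n.natAbs * t := by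
    rw [← Int.cast_natCast n.natAbs]
    exact mod_cast hat
  have habs : (n.natAbs : ℚ) = n.sign * n := by
    rw [← Int.cast_natCast, ← Int.sign_mul_self_eq_natAbs, Int.cast_mul]
  have hu0 : (n.natAbs : ℚ) ≠ 0 := mod_cast NeZero.ne n.natAbs
  field_simp
  linear_combination (b : ℚ) * habs + n * hatQ

lemma mul_prod_zpow_eq_div {r : ℕ} (p : Fin r → ℕ) (n : ℤ) (ν : Fin r → ℤ) :
    (n * ∏ i, (p i : ℚ) ^ ν i : ℚ) =
      (n * ∏ i, (p i : ℤ) ^ (ν i).toNat : ℤ) / (∏ i, (p i : ℤ) ^ (-ν i).toNat : ℤ) := by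
  rw [prod_zpow_eq_div]
  push_cast
  exact (mul_div_assoc _ _ _).symm

section Arithmetic

variable {r : ℕ} {p : Fin r → ℕ} [hp : ∀ i, Fact (p i).Prime]

lemma isCoprime_prod_pow {n : ℤ} (hn : ∀ i, ¬ (p i : ℤ) ∣ n) (e : Fin r → ℕ) :
    IsCoprime n (∏ i, (p i : ℤ) ^ e i) :=
  IsCoprime.prod_right fun i _ => IsCoprime.pow_right
    ((Nat.prime_iff_prime_int.1 (hp i).out).irreducible.coprime_iff_not_dvd.2 (hn i)).symm

lemma isCoprime_prod_pow_toNat (hinj : Function.Injective p) (ν : Fin r → ℤ) :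
    IsCoprime (∏ i, (p i : ℤ) ^ (ν i).toNat) (∏ i, (p i : ℤ) ^ (-ν i).toNat) := by
  refine IsCoprime.prod_left fun i _ => IsCoprime.prod_right fun j _ => ?_
  rcases eq_or_ne i j with rfl | hij
  · rcases le_total 0 (ν i) with h | h
    · simpa [Int.toNat_of_nonpos (neg_nonpos.2 h)] using isCoprime_one_right
    · simpa [Int.toNat_of_nonpos h] using isCoprime_one_left
  · exact (Nat.isCoprime_iff_coprime.2
      ((Nat.coprime_primes (hp i).out (hp j).out).2 (hinj.ne hij))).pow

lemma factorization_mul_prod_pow (hinj : Function.Injective p) {n : ℕ} {i : Fin r}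
    (hn : ¬ p i ∣ n) (e : Fin r → ℕ) :
    (n * ∏ j, p j ^ e j).factorization (p i) = e i := by
  have hpow (j : Fin r) : p j ^ e j ≠ 0 := pow_ne_zero _ (hp j).out.ne_zero
  have hn0 : n ≠ 0 := by
    rintro rfl
    exact hn (dvd_zero _)
  rw [Nat.factorization_mul hn0 (Finset.prod_ne_zero_iff.2 fun j _ => hpow j),
    Nat.factorization_prod fun j _ => hpow j]
  simp [Nat.factorization_eq_zero_of_not_dvd hn, (hp _).out.factorization_pow,
    Finsupp.single_apply, hinj.eq_iff]

lemma natAbs_num_mul_den (hinj : Function.Injective p) {n : ℤ} (hn : ∀ i, ¬ (p i : ℤ) ∣ n)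
    (ν : Fin r → ℤ) :
    (n * ∏ i, (p i : ℚ) ^ ν i : ℚ).num.natAbs * (n * ∏ i, (p i : ℚ) ^ ν i : ℚ).den =
      n.natAbs * ∏ i, p i ^ (ν i).natAbs := by
  have hpos : 0 < ∏ i, (p i : ℤ) ^ (-ν i).toNat :=
    Finset.prod_pos fun i _ => pow_pos (mod_cast (hp i).out.pos) _
  have hcop := Int.isCoprime_iff_nat_coprime.1
    ((isCoprime_prod_pow hn fun i => (-ν i).toNat).mul_left (isCoprime_prod_pow_toNat hinj ν))
  have hden := Rat.den_div_eq_of_coprime hpos hcop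
  have hnatAbs (i : Fin r) : p i ^ (ν i).natAbs = p i ^ (ν i).toNat * p i ^ (-ν i).toNat := by
    rw [← pow_add]
    congr 1
    omega
  have hprod (e : Fin r → ℕ) : (∏ i, (p i : ℤ) ^ e i).natAbs = ∏ i, p i ^ e i := by
    exact_mod_cast Int.natAbs_natCast (∏ i, p i ^ e i)
  rw [mul_prod_zpow_eq_div, Rat.num_div_eq_of_coprime hpos hcop, ← Int.natAbs_natCast (Rat.den _),
    hden, Int.natAbs_mul, hprod, hprod, mul_assoc, ← Finset.prod_mul_distrib]
  simp only [hnatAbs]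

lemma unitPart_mul_prod_zpow (hinj : Function.Injective p) {n : ℤ}
    (hn : ∀ i, ¬ (p i : ℤ) ∣ n) (ν : Fin r → ℤ) :
    unitPart r p (n * ∏ i, (p i : ℚ) ^ ν i) = n.natAbs := by
  have hn' (i : Fin r) : ¬ p i ∣ n.natAbs := fun h => hn i (Int.natCast_dvd.2 h)
  simp only [unitPart, natAbs_num_mul_den hinj hn, factorization_mul_prod_pow hinj (hn' _)]
  exact Nat.mul_div_cancel _ (Finset.prod_pos fun i _ => pow_pos (hp i).out.pos _)

lemma norm_mul_prod_zpow (hinj : Function.Injective p) {n : ℤ} {i : Fin r}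
    (hn : ¬ (p i : ℤ) ∣ n) (ν : Fin r → ℤ) :
    ‖((n * ∏ j, (p j : ℚ) ^ ν j : ℚ) : ℚ_[p i])‖ = (p i : ℝ) ^ (-ν i) := by
  have hnorm {m : ℤ} (hm : ¬ (p i : ℤ) ∣ m) : ‖(m : ℚ_[p i])‖ = 1 :=
    (Padic.norm_int_le_one m).eq_of_not_lt (mt Padic.norm_intCast_lt_one_iff.1 hm)
  have hother (j : Fin r) (hj : j ≠ i) : ‖(p j : ℚ_[p i])‖ = 1 := by
    rw [← Int.cast_natCast]
    refine hnorm fun h => hj (hinj ?_)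
    exact ((Nat.prime_dvd_prime_iff_eq (hp i).out (hp j).out).1 (mod_cast h)).symm
  push_cast
  rw [norm_mul, norm_prod, hnorm hn, one_mul, Finset.prod_eq_single i]
  · rw [norm_zpow, Padic.norm_p, zpow_neg, inv_zpow]
  · intro j _ hj
    rw [norm_zpow, hother j hj, one_zpow]
  · simp

lemma abs_mul_prod_norm (hinj : Function.Injective p) {n : ℤ}
    (hn : ∀ i, ¬ (p i : ℤ) ∣ n) (ν : Fin r → ℤ) :
    |((n * ∏ j, (p j : ℚ) ^ ν j : ℚ) : ℝ)| *
      ∏ i, ‖((n * ∏ j, (p j : ℚ) ^ ν j : ℚ) : ℚ_[p i])‖ = |(n : ℝ)| := by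
  have hp0 (i : Fin r) : (p i : ℝ) ^ ν i ≠ 0 := zpow_ne_zero _ (mod_cast (hp i).out.ne_zero)
  simp only [norm_mul_prod_zpow hinj (hn _)]
  push_cast
  rw [abs_mul, Finset.abs_prod, mul_assoc, ← Finset.prod_mul_distrib]
  simp [abs_zpow, hp0]

lemma exists_eq_mul_add_of_coprimePair (hinj : Function.Injective p) {β γ : ℚ} (hγ : γ ≠ 0)
    (h : CoprimePair r p β γ) :
    ∃ a < unitPart r p γ, (unitPart r p γ).Coprime a ∧
      ∃ k ∈ PinvZ r p, β = γ * (a / unitPart r p γ + k) := by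
  obtain ⟨m, n, μ, ν, rfl, rfl, -, hn, hmn⟩ := h
  rw [unitPart_mul_prod_zpow hinj hn]
  have hp0 (i : Fin r) : (p i : ℚ) ≠ 0 := mod_cast (hp i).out.ne_zero
  have hn0 : n ≠ 0 := by
    rintro rfl
    simp at hγ
  let A : ℤ := ∏ i, (p i : ℤ) ^ (μ i - ν i).toNat
  let D : ℤ := ∏ i, (p i : ℤ) ^ (-(μ i - ν i)).toNat
  have hD0 : D ≠ 0 := Finset.prod_ne_zero_iff.2 fun i _ => pow_ne_zero _ (mod_cast hp0 i)
  obtain ⟨a, hau, ha, t, hat⟩ := exists_div_mul_eq_add hn0 hD0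
    (hmn.mul_left (isCoprime_prod_pow hn _).symm : IsCoprime (m * A) n)
    (isCoprime_prod_pow hn _).symm
  refine ⟨a, hau, ha, t / D, ⟨t, fun i => -((-(μ i - ν i)).toNat : ℤ), ?_⟩, ?_⟩
  · simp only [zpow_neg, zpow_natCast, Finset.prod_inv_distrib, div_eq_mul_inv]
    push_cast [D]
    rfl
  have hquot : ∏ i, (p i : ℚ) ^ μ i = (∏ i, (p i : ℚ) ^ ν i) * (A / D) := by
    push_cast [A, D]
    rw [← prod_zpow_eq_div, ← Finset.prod_mul_distrib]
    simp [← zpow_add₀ (hp0 _)]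
  rw [← hat, hquot]
  push_cast
  field_simp

lemma abs_mul_prod_norm_of_coprimePair (hinj : Function.Injective p) {β γ : ℚ}
    (h : CoprimePair r p β γ) :
    |(γ : ℝ)| * ∏ i, ‖(γ : ℚ_[p i])‖ = unitPart r p γ := by
  obtain ⟨_, n, _, ν, -, rfl, -, hn, -⟩ := h
  rw [abs_mul_prod_norm hinj hn, unitPart_mul_prod_zpow hinj hn, Nat.cast_natAbs, Int.cast_abs]

lemma exists_eq_of_prime_dvd_den {k : ℚ} (hk : k ∈ PinvZ r p) {ℓ : ℕ} (hℓ : ℓ.Prime)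
    (hdvd : ℓ ∣ k.den) : ∃ i, ℓ = p i := by
  obtain ⟨n, ν, rfl⟩ := hk
  rw [mul_prod_zpow_eq_div, ← Rat.divInt_eq_div] at hdvd
  have hprod : ℓ ∣ ∏ i, p i ^ (-ν i).toNat :=
    mod_cast (Int.natCast_dvd_natCast.2 hdvd).trans (Rat.den_dvd _ _)
  obtain ⟨i, -, hi⟩ := (hℓ.prime.dvd_finsetProd_iff _).1 hprod
  exact ⟨i, (Nat.prime_dvd_prime_iff_eq hℓ (hp i).out).1 (hℓ.dvd_of_dvd_pow hi)⟩

lemma eq_of_norm_sub_le_one_of_abs_sub_lt_one {k l : ℚ} (hk : k ∈ PinvZ r p)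
    (hl : l ∈ PinvZ r p) (hnorm : ∀ i, ‖((k - l : ℚ) : ℚ_[p i])‖ ≤ 1) (habs : |k - l| < 1) :
    k = l := by
  have hden : (k - l).den = 1 := by
    refine Nat.eq_one_iff_not_exists_prime_dvd.2 fun ℓ hℓ hdvd => ?_
    obtain ⟨i, rfl⟩ : ∃ i, ℓ = p i :=
      (hℓ.dvd_mul.1 (hdvd.trans (Rat.sub_den_dvd k l))).elim
        (exists_eq_of_prime_dvd_den hk hℓ) (exists_eq_of_prime_dvd_den hl hℓ)
    exact Rat.padicValuation_le_one_iff.1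
      ((Padic.norm_rat_le_one_iff_padicValuation_le_one _).1 (hnorm i)) hdvd
  have hnum := Rat.coe_int_num_of_den_eq_one hden
  rw [← hnum] at habs
  rw [← sub_eq_zero, ← hnum, Int.cast_eq_zero, ← Int.abs_lt_one_iff]
  exact mod_cast habs

lemma finite_setOf_coprimePair_zero : {β : ℚ | CoprimePair r p β 0}.Finite := by
  refine (Set.toFinite {1, -1}).subset ?_
  rintro β ⟨m, n, μ, ν, rfl, hγ, -, hn, hmn⟩
  have hp0 (i : Fin r) : (p i : ℚ) ≠ 0 := mod_cast (hp i).out.ne_zero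
  have hn0 : n = 0 := by
    simpa [Finset.prod_eq_zero_iff, zpow_ne_zero _ (hp0 _)] using hγ.symm
  have : IsEmpty (Fin r) := ⟨fun i => hn i (hn0 ▸ dvd_zero _)⟩
  rw [hn0, isCoprime_zero_right, Int.isUnit_iff] at hmn
  rcases hmn with rfl | rfl <;> simp

end Arithmetic

variable {r : ℕ} {p : Fin r → ℕ} [hp : ∀ i, Fact (p i).Prime]

instance : (lamP r p).IsAddLeftInvariant :=
  inferInstanceAs (Measure.prod _ _).IsAddLeftInvariant

lemma measurableSet_ZP : MeasurableSet (ZP r p) := by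
  have h : ZP r p = Ico 0 1 ×ˢ univ.pi fun i => Metric.closedBall (0 : ℚ_[p i]) 1 := by
    ext x
    simp [ZP]
  rw [h]
  exact measurableSet_Ico.prod (.univ_pi fun i => measurableSet_closedBall)

lemma eq_of_iota_add_mem_ZP {k l : ℚ} (hk : k ∈ PinvZ r p) (hl : l ∈ PinvZ r p) {x : QP r p}
    (hkx : iota r p k + x ∈ ZP r p) (hlx : iota r p l + x ∈ ZP r p) : k = l := by
  refine eq_of_norm_sub_le_one_of_abs_sub_lt_one hk hl (fun i => ?_) ?_
  · have h : ((k - l : ℚ) : ℚ_[p i]) = ((k : ℚ_[p i]) + x.2 i) - (l + x.2 i) := by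
      push_cast
      ring
    rw [h, sub_eq_add_neg]
    exact (Padic.nonarchimedean _ _).trans
      (max_le (hkx.2 i) ((norm_neg _).trans_le (hlx.2 i)))
  · have hk0 : 0 ≤ (k : ℝ) + x.1 ∧ (k : ℝ) + x.1 < 1 := hkx.1
    have hl0 : 0 ≤ (l : ℝ) + x.1 ∧ (l : ℝ) + x.1 < 1 := hlx.1
    have h : |(k : ℝ) - l| < 1 := abs_lt.2 ⟨by linarith, by linarith⟩
    exact_mod_cast h

variable (r p) in
/-- The set of `x ∈ ℚ_P` with `d(γ·x, ι(β)) < ρ`. The approximation problem asks which points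
lie in infinitely many of these sets, with `ρ = ψ(γ)`. -/
def approxSet (β γ : ℚ) (ρ : ℝ) : Set (QP r p) :=
  {x | dP r p (smulQ r p γ x) (iota r p β) < ρ}

lemma approxSet_subset_ball_prod_ball (β : ℚ) {γ : ℚ} (hγ : γ ≠ 0) (ρ : ℝ) :
    approxSet r p β γ ρ ⊆ Metric.ball ((β : ℝ) / γ) (ρ / |(γ : ℝ)|) ×ˢ
      univ.pi fun i => Metric.ball ((β : ℚ_[p i]) / γ) (ρ / ‖(γ : ℚ_[p i])‖) := by
  have hdist {𝕜 : Type} [NormedField 𝕜] [CharZero 𝕜] {y : 𝕜} (hy : ‖γ * y - β‖ < ρ) :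
      y ∈ Metric.ball ((β : 𝕜) / γ) (ρ / ‖(γ : 𝕜)‖) := by
    have hγ' : (γ : 𝕜) ≠ 0 := mod_cast hγ
    rw [mem_ball_iff_norm, lt_div_iff₀ (norm_pos_iff.2 hγ'), ← norm_mul]
    rwa [sub_mul, div_mul_cancel₀ _ hγ', mul_comm]
  intro x hx
  obtain ⟨hreal, hpadic⟩ := max_lt_iff.1 (show dP r p (smulQ r p γ x) (iota r p β) < ρ from hx)
  refine ⟨hdist hreal, fun i _ => hdist ((le_ciSup ?_ i).trans_lt hpadic)⟩
  exact (Set.finite_range _).bddAbove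

lemma lamP_approxSet_le (β : ℚ) {γ : ℚ} (hγ : γ ≠ 0) (ρ : ℝ) :
    lamP r p (approxSet r p β γ ρ) ≤
      ENNReal.ofReal (2 * ρ ^ (r + 1) / (|(γ : ℝ)| * ∏ i, ‖(γ : ℚ_[p i])‖)) := by
  rcases le_or_gt ρ 0 with hρ | hρ
  · have hempty : approxSet r p β γ ρ = ∅ := eq_empty_of_forall_notMem fun x hx =>
      hρ.not_gt ((abs_nonneg _).trans_lt (lt_of_le_of_lt (le_max_left _ _) hx))
    simp [hempty]
  calc lamP r p (approxSet r p β γ ρ)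
      ≤ _ := measure_mono (approxSet_subset_ball_prod_ball β hγ ρ)
    _ = ENNReal.ofReal (2 * (ρ / |(γ : ℝ)|)) *
          ∏ i, padicHaar (p i) (Metric.ball ((β : ℚ_[p i]) / γ) (ρ / ‖(γ : ℚ_[p i])‖)) := by
        rw [lamP, Measure.prod_prod, Measure.pi_pi, Real.volume_ball]
    _ ≤ ENNReal.ofReal (2 * (ρ / |(γ : ℝ)|)) *
          ∏ i, ENNReal.ofReal (ρ / ‖(γ : ℚ_[p i])‖) := by
        gcongr
        exact padicHaar_ball_le _ _
    _ = ENNReal.ofReal (2 * ρ ^ (r + 1) / (|(γ : ℝ)| * ∏ i, ‖(γ : ℚ_[p i])‖)) := by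
        rw [← ENNReal.ofReal_prod_of_nonneg fun i _ => by positivity,
          ← ENNReal.ofReal_mul (by positivity), Finset.prod_div_distrib]
        simp only [Finset.prod_const, Finset.card_univ, Fintype.card_fin]
        congr 1
        rw [pow_succ, ← div_div]
        ring

lemma approxSet_mul_add (c k γ : ℚ) (ρ : ℝ) :
    approxSet r p (γ * (c + k)) γ ρ =
      (fun x => -iota r p k + x) ⁻¹' approxSet r p (γ * c) γ ρ := by
  have hcomm {𝕜 : Type} [CommRing 𝕜] (g k c y : 𝕜) :
      g * y - g * (c + k) = g * (-k + y) - g * c := by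
    ring
  ext x
  simp [approxSet, dP, smulQ, iota, hcomm]

lemma tsum_lamP_inter_approxSet_le (c γ : ℚ) (ρ : ℝ) :
    ∑' k : PinvZ r p, lamP r p (ZP r p ∩ approxSet r p (γ * (c + k)) γ ρ) ≤
      lamP r p (approxSet r p (γ * c) γ ρ) := by
  simp only [approxSet_mul_add]
  exact tsum_measure_inter_translate_le _ measurableSet_ZP _ (fun k : PinvZ r p => iota r p k)
    fun k l x hk hl => Subtype.ext (eq_of_iota_add_mem_ZP k.2 l.2 hk hl)

lemma tsum_coprimePair_lamP_le (hinj : Function.Injective p) (ψ : ℚ → ℝ) {γ : ℚ} (hγ : γ ≠ 0) :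
    ∑' β : {β | CoprimePair r p β γ}, lamP r p (ZP r p ∩ approxSet r p β γ (ψ γ)) ≤
      2 * ENNReal.ofReal (dsWeight r p ψ γ) := by
  rcases isEmpty_or_nonempty {β | CoprimePair r p β γ} with hempty | ⟨⟨_, hβ₀⟩⟩
  · simp
  set u := unitPart r p γ with hu
  have hprod : |(γ : ℝ)| * ∏ i, ‖(γ : ℚ_[p i])‖ = u := abs_mul_prod_norm_of_coprimePair hinj hβ₀
  let measureOf (β : ℚ) : ENNReal := lamP r p (ZP r p ∩ approxSet r p β γ (ψ γ))
  let residues : Finset ℕ := {a ∈ Finset.range u | u.Coprime a}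
  let residueClass (a : ℕ) : Set ℚ := range fun k : PinvZ r p => γ * (a / u + k)
  have hcover : {β | CoprimePair r p β γ} ⊆ ⋃ a ∈ residues, residueClass a := by
    intro β hβ
    obtain ⟨a, hau, ha, k, hk, rfl⟩ := exists_eq_mul_add_of_coprimePair hinj hγ hβ
    exact mem_biUnion (Finset.mem_filter.2 ⟨Finset.mem_range.2 hau, ha⟩) ⟨⟨k, hk⟩, rfl⟩
  have hclass (a : ℕ) :
      ∑' β : residueClass a, measureOf β ≤ ENNReal.ofReal (2 * ψ γ ^ (r + 1) / u) :=
    calc ∑' β : residueClass a, measureOf β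
        ≤ ∑' k : PinvZ r p, measureOf (γ * (a / u + k)) :=
          ENNReal.tsum_le_tsum_comp_of_surjective rangeFactorization_surjective _
      _ ≤ lamP r p (approxSet r p (γ * (a / u)) γ (ψ γ)) := tsum_lamP_inter_approxSet_le _ _ _
      _ ≤ ENNReal.ofReal (2 * ψ γ ^ (r + 1) / u) := hprod ▸ lamP_approxSet_le _ hγ _
  calc ∑' β : {β | CoprimePair r p β γ}, measureOf β
      ≤ ∑' β : ⋃ a ∈ residues, residueClass a, measureOf β :=
        ENNReal.tsum_mono_subtype measureOf hcover
    _ ≤ ∑ a ∈ residues, ∑' β : residueClass a, measureOf β := ENNReal.tsum_biUnion_le measureOf _ _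
    _ ≤ ∑ _a ∈ residues, ENNReal.ofReal (2 * ψ γ ^ (r + 1) / u) :=
        Finset.sum_le_sum fun a _ => hclass a
    _ = ENNReal.ofReal (u.totient * (2 * ψ γ ^ (r + 1) / u)) := by
        rw [Finset.sum_const, nsmul_eq_mul, ENNReal.ofReal_mul (Nat.cast_nonneg _),
          ENNReal.ofReal_natCast]
        rfl
    _ = 2 * ENNReal.ofReal (dsWeight r p ψ γ) := by
        rw [← ENNReal.ofReal_ofNat 2, ← ENNReal.ofReal_mul zero_le_two, dsWeight, ← hu]
        ring_nf

end DuffinSchaeffer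

open DuffinSchaeffer in
theorem diagonal_duffin_schaeffer_converse_general (r : ℕ) (p : Fin r → ℕ)
    [∀ i, Fact (p i).Prime] (hinj : Function.Injective p) (ψ : ℚ → ℝ)
    (hconv : ∑' γ : (PinvZ r p), ENNReal.ofReal (dsWeight r p ψ γ) ≠ ⊤) :
    lamP r p (Apsi r p ψ) = 0 := by
  let pairs := Σ γ : ↥(PinvZ r p \ {0}), {β | CoprimePair r p β γ}
  have hsum : ∑' x : pairs, lamP r p (ZP r p ∩ approxSet r p x.2 x.1 (ψ x.1)) ≠ ⊤ := by
    refine ne_top_of_le_ne_top (ENNReal.mul_ne_top (ENNReal.ofNat_ne_top (n := 2)) hconv) ?_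
    calc ∑' x : pairs, lamP r p (ZP r p ∩ approxSet r p x.2 x.1 (ψ x.1))
        ≤ ∑' γ : ↥(PinvZ r p \ {0}), 2 * ENNReal.ofReal (dsWeight r p ψ γ) := by
          rw [ENNReal.tsum_sigma']
          exact ENNReal.tsum_le_tsum fun γ => tsum_coprimePair_lamP_le hinj ψ γ.2.2
      _ ≤ 2 * ∑' γ : PinvZ r p, ENNReal.ofReal (dsWeight r p ψ γ) := by
          rw [ENNReal.tsum_mul_left]
          gcongr
          exact ENNReal.tsum_mono_subtype (fun γ => ENNReal.ofReal (dsWeight r p ψ γ)) sdiff_subset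
  have hae := ae_finite_setOfPred_mem hsum
  refine measure_mono_null ?_ (ae_iff.1 hae)
  intro x hx hfin
  refine hx.2 (((hfin.image fun y => ((y.2 : ℚ), (y.1 : ℚ))).union
    ((finite_setOf_coprimePair_zero (p := p)).prod (finite_singleton 0))).subset ?_)
  rintro ⟨β, γ⟩ ⟨-, hγ, hcop, hlt⟩
  rcases eq_or_ne γ 0 with rfl | hγ0
  · exact Or.inr ⟨hcop, rfl⟩
  · exact Or.inl ⟨⟨⟨γ, hγ, hγ0⟩, β, hcop⟩, ⟨hx.1, hlt⟩, rfl⟩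

/-- **Partial converse to the diagonal Duffin–Schaeffer theorem.**
If `ψ : P⁻¹ℤ → ℝ_{≥0}` satisfies `ψ(γ) ≤ 1/(2L(γ))` and the series
`Σ_γ φ(n)ψ(γ)^{r+1}/n` converges, then `λ(𝒜(ψ)) = 0`. -/
theorem diagonal_duffin_schaeffer_converse (r : ℕ) (p : Fin r → ℕ)
    [∀ i, Fact (p i).Prime] (hinj : Function.Injective p)
    (ψ : ℚ → ℝ) (hψ0 : ∀ γ, 0 ≤ ψ γ) (hψL : ∀ γ, ψ γ ≤ 1 / (2 * LP r p γ))
    (hconv : ∑' γ : (PinvZ r p), ENNReal.ofReal (dsWeight r p ψ γ) ≠ ⊤) :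
    lamP r p (Apsi r p ψ) = 0 :=
  diagonal_duffin_schaeffer_converse_general r p hinj ψ hconv
end

section
/- Let ψ : P⁻¹ℤ → ℝ_{≥0} satisfy ψ(γ) ≤ 1/(2 L(γ)) for all γ. Then the set ℰ(ψ) of those x ∈ ℤ_P such that d(γ·x, ι(β)) ≤ ψ(γ) for infinitely many coprime pairs β, γ ∈ P⁻¹ℤ has measure λ(ℰ(ψ)) equal to 0 or 1. -/
open MeasureTheory Filter Set

open scoped Topology

/-!
The condition `d(γ·x, ι(β)) ≤ ψ(γ)` puts `x` in a box around `ι(β/γ)`. On `ℤ_P` the set `ℰ(ψ)`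
agrees almost everywhere with the `ι(P⁻¹ℤ)`-periodic limsup set of these boxes along denominators
`γ` whose part prime to `p_1 ⋯ p_r` tends to infinity: off the null set of points with a rational
coordinate, the bound on `ψ` leaves only finitely many approximations with that part bounded.

For the periodic set one follows Gallagher. By a lemma of Cassels, a consequence of the Lebesgue
density theorem, enlarging the real radii by a constant factor changes a limsup set only by a null
set. Let `q` be a prime other than the `p_i` and split the denominators according to whether `q`
divides them not at all, exactly once, or at least twice. Up to such an enlargement the first limsup
set is preserved by `x ↦ q x` and the second by `x ↦ q x + ι(1/q)`; these maps act ergodically on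
the solenoid `ℚ_P / ι(P⁻¹ℤ)`, so both sets are null or conull. The third set is invariant under
translation by `ι(a/q)` for `a ∈ P⁻¹ℤ`. If the whole limsup set is not conull, then it agrees almost
everywhere with the third set for every `q`, hence is almost invariant under a dense set of
translations and therefore null or conull.
-/

section LimsupSets

variable {α ι : Type*}

lemma measurableSet_setOf_frequently_mem [MeasurableSpace α] [Countable ι] {l : Filter ι}
    [l.IsCountablyGenerated] {A : ι → Set α} (hA : ∀ i, MeasurableSet (A i)) :
    MeasurableSet {x | ∃ᶠ i in l, x ∈ A i} := by
  obtain ⟨u, hu⟩ := l.exists_antitone_basis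
  have heq : {x | ∃ᶠ i in l, x ∈ A i} = ⋂ n, ⋃ i ∈ u n, A i := by
    ext x
    simp [hu.1.frequently_iff]
  rw [heq]
  exact .iInter fun n => .biUnion (to_countable _) fun i _ => hA i

variable [PseudoMetricSpace α] [MeasurableSpace α] [SecondCountableTopology α] [BorelSpace α]
  (μ : Measure α) [IsUnifLocDoublingMeasure μ] [IsLocallyFiniteMeasure μ]
  {l : Filter ι} {b : ι → α} {ρ : ι → ℝ} {c : ℝ}

lemma measure_frequently_dist_le_mul_inter_forall_lt (hρ : Tendsto ρ l (𝓝 0)) (hc : 1 ≤ c)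
    {s : Set ι} (hs : s ∈ l) :
    μ {x | (∃ᶠ i in l, dist x (b i) ≤ c * ρ i) ∧ ∀ i ∈ s, ρ i < dist x (b i)} = 0 := by
  set A := {x | (∃ᶠ i in l, dist x (b i) ≤ c * ρ i) ∧ ∀ i ∈ s, ρ i < dist x (b i)}
  rw [← μ.restrict_apply_self, measure_eq_zero_iff_ae_notMem]
  filter_upwards [IsUnifLocDoublingMeasure.ae_tendsto_measure_inter_div μ A c] with x hdens hxA
  set l' := l ⊓ 𝓟 {i | dist x (b i) ≤ c * ρ i}
  have : l'.NeBot := frequently_mem_iff_neBot.1 hxA.1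
  have hnear : ∀ᶠ i in l', dist x (b i) ≤ c * ρ i := mem_inf_of_right (mem_principal_self _)
  have hmem : ∀ᶠ i in l', i ∈ s := mem_inf_of_left hs
  have hpos : ∀ᶠ i in l', ρ i ∈ Ioi 0 := by
    filter_upwards [hnear, hmem] with i hi his
    have := hxA.2 i his
    by_contra! hneg
    rw [mem_Ioi, not_lt] at hneg
    nlinarith
  have hone := hdens b ρ (tendsto_nhdsWithin_iff.2 ⟨hρ.mono_left inf_le_left, hpos⟩) hnear
  have hzero : (fun i => μ (A ∩ Metric.closedBall (b i) (ρ i)) / μ (Metric.closedBall (b i) (ρ i)))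
      =ᶠ[l'] 0 := by
    filter_upwards [hmem] with i his
    have hdisj : A ∩ Metric.closedBall (b i) (ρ i) = ∅ :=
      disjoint_iff_inter_eq_empty.1 (disjoint_left.2 fun y hy hyb => (hy.2 i his).not_ge hyb)
    simp [hdisj]
  exact zero_ne_one (tendsto_nhds_unique (tendsto_const_nhds.congr' hzero.symm) hone)

lemma ae_frequently_dist_le_of_frequently_dist_le_mul [l.IsCountablyGenerated]
    (hρ : Tendsto ρ l (𝓝 0)) (hc : 1 ≤ c) :
    ∀ᵐ x ∂μ, (∃ᶠ i in l, dist x (b i) ≤ c * ρ i) → ∃ᶠ i in l, dist x (b i) ≤ ρ i := by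
  obtain ⟨u, hu⟩ := l.exists_antitone_basis
  have hnull n := measure_frequently_dist_le_mul_inter_forall_lt μ (b := b) hρ hc (hu.1.mem_of_mem
    (i := n) trivial)
  refine measure_mono_null (fun x hx => ?_) (measure_iUnion_null hnull)
  obtain ⟨hfreq, hev⟩ := Classical.not_imp.1 hx
  obtain ⟨n, -, hn⟩ := hu.1.eventually_iff.1 (not_frequently.1 hev)
  exact mem_iUnion.2 ⟨n, hfreq, fun i hi => not_le.1 (hn hi)⟩

end LimsupSets

section Ergodicity

variable {G : Type*} [AddCommGroup G] [TopologicalSpace G] [IsTopologicalAddGroup G]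
  [MeasurableSpace G] [BorelSpace G] [R1Space G] {μ : Measure G} [μ.IsAddLeftInvariant]
  [IsLocallyFiniteMeasure μ] [μ.InnerRegularCompactLTTop] {s t T : Set G}

lemma measure_preimage_add_left_sdiff_eq_zero_of_dense (ht : MeasurableSet t) (hts : t ⊆ s)
    (htop : μ t ≠ ⊤) (hT : Dense T) (hTs : ∀ g ∈ T, ∀ᵐ x ∂μ, g + x ∈ s → x ∈ s)
    (g : G) : μ ((g + ·) ⁻¹' t \ s) = 0 := by
  let shift : C(G, C(G, G)) := ContinuousMap.curry ⟨fun x => x.1 + x.2, continuous_add⟩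
  have hlim : Tendsto (fun a => μ (symmDiff (shift a ⁻¹' t) (shift g ⁻¹' t))) (𝓝[T] g) (𝓝 0) :=
    tendsto_measure_symmDiff_preimage_nhds_zero
      ((shift.continuous.tendsto g).mono_left nhdsWithin_le_nhds)
      (.of_forall fun a => measurePreserving_add_left μ a) (measurePreserving_add_left μ g)
      ht.nullMeasurableSet htop
  have : (𝓝[T] g).NeBot := mem_closure_iff_nhdsWithin_neBot.1 (hT g)
  refine le_antisymm (ge_of_tendsto hlim ?_) zero_le
  filter_upwards [self_mem_nhdsWithin] with a ha
  refine measure_mono_ae ?_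
  filter_upwards [hTs a ha] with x hax hx
  exact Or.inr ⟨hx.1, fun hat => hx.2 (hax (hts hat))⟩

lemma eventuallyConst_ae_of_dense_add_mem_imp [SecondCountableTopology G] [SigmaFinite μ]
    (hs : MeasurableSet s) (hT : Dense T) (hTs : ∀ g ∈ T, ∀ᵐ x ∂μ, g + x ∈ s → x ∈ s) :
    EventuallyConst s (ae μ) := by
  have himp (g : G) : ∀ᵐ x ∂μ, g + x ∈ s → x ∈ s := by
    have hnull n := measure_preimage_add_left_sdiff_eq_zero_of_dense
      (hs.inter (measurableSet_spanningSets μ n)) inter_subset_left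
      ((measure_mono inter_subset_right).trans_lt (measure_spanningSets_lt_top μ n)).ne hT hTs g
    refine measure_mono_null (fun x hx => ?_) (measure_iUnion_null hnull)
    obtain ⟨hgx, hx⟩ := Classical.not_imp.1 hx
    obtain ⟨n, hn⟩ := mem_iUnion.1 ((iUnion_spanningSets μ).symm ▸ mem_univ (g + x))
    exact mem_iUnion.2 ⟨n, ⟨hgx, hn⟩, hx⟩
  refine aeconst_of_forall_preimage_vadd_ae_eq G hs.nullMeasurableSet fun g => ?_
  have himp_neg := (measurePreserving_add_left μ g).quasiMeasurePreserving.ae (himp (-g))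
  refine eventuallyEq_set.2 ?_
  filter_upwards [himp g, himp_neg] with x hx hgx
  exact ⟨hx, fun h => hgx (by simpa using h)⟩

end Ergodicity

section Arithmetic

variable {r : ℕ} {p : Fin r → ℕ}

/-- The product `Q = p_1 ⋯ p_r`, so that `P⁻¹ℤ = ℤ[1/Q]`. -/
def primeProd (p : Fin r → ℕ) : ℕ := ∏ i, p i

lemma dvd_primeProd (i : Fin r) : p i ∣ primeProd p := Finset.dvd_prod_of_mem _ (Finset.mem_univ i)

variable [∀ i, Fact (p i).Prime]

lemma primeProd_pos : 0 < primeProd p := Finset.prod_pos fun i _ => (Fact.out : (p i).Prime).pos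

lemma primeProd_ne_zero : (primeProd p : ℚ) ≠ 0 := Nat.cast_ne_zero.2 primeProd_pos.ne'

lemma cast_prime_ne_zero (i : Fin r) : (p i : ℚ) ≠ 0 :=
  Nat.cast_ne_zero.2 (Fact.out : (p i).Prime).ne_zero

lemma norm_natCast_eq_one_of_coprime_primeProd {n : ℕ} (hn : n.Coprime (primeProd p)) (i : Fin r) :
    ‖(n : ℚ_[p i])‖ = 1 :=
  Padic.norm_natCast_eq_one_iff.2 (hn.coprime_dvd_right (dvd_primeProd i)).symm

lemma norm_primeProd_lt_one (i : Fin r) : ‖(primeProd p : ℚ_[p i])‖ < 1 := by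
  have := (Padic.norm_intCast_lt_one_iff (p := p i) (k := primeProd p)).2
    (Int.natCast_dvd_natCast.2 (dvd_primeProd i))
  exact_mod_cast this

variable (p) in
lemma exists_norm_primeProd_pow_mul_lt (B : Fin r → ℝ) {ε : ℝ} (hε : 0 < ε) :
    ∃ N : ℕ, ∀ i, ‖(primeProd p : ℚ_[p i])‖ ^ N * B i < ε := by
  suffices h : ∀ᶠ N : ℕ in atTop, ∀ i, ‖(primeProd p : ℚ_[p i])‖ ^ N * B i < ε from h.exists
  refine eventually_all.2 fun i => ?_
  have hlim := (tendsto_pow_atTop_nhds_zero_of_lt_one (norm_nonneg _)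
    (norm_primeProd_lt_one (p := p) i)).mul_const (B i)
  rw [zero_mul] at hlim
  exact hlim.eventually (gt_mem_nhds hε)

lemma prod_zpow_ne_zero (ν : Fin r → ℤ) : ∏ i, (p i : ℚ) ^ ν i ≠ 0 :=
  Finset.prod_ne_zero_iff.2 fun i _ => zpow_ne_zero _ (cast_prime_ne_zero i)

lemma exists_prod_zpow_eq_div (ν : Fin r → ℤ) :
    ∃ k N : ℕ, ∏ i, (p i : ℚ) ^ ν i = k / (primeProd p : ℚ) ^ N := by
  obtain ⟨N, hN⟩ : ∃ N : ℕ, ∀ i, 0 ≤ ν i + N :=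
    ⟨∑ i, (ν i).natAbs, fun i => by
      have := Finset.single_le_sum (f := fun i => (ν i).natAbs) (fun _ _ => Nat.zero_le _)
        (Finset.mem_univ i)
      lia⟩
  refine ⟨∏ i, p i ^ (ν i + N).toNat, N, ?_⟩
  rw [eq_div_iff (pow_ne_zero _ primeProd_ne_zero), primeProd]
  push_cast
  rw [← Finset.prod_pow, ← Finset.prod_mul_distrib]
  refine Finset.prod_congr rfl fun i _ => ?_
  rw [← zpow_natCast, ← zpow_natCast, ← zpow_add₀ (cast_prime_ne_zero i),
    Int.toNat_of_nonneg (hN i)]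

lemma mem_PinvZ_iff {γ : ℚ} :
    γ ∈ PinvZ r p ↔ ∃ (k : ℤ) (N : ℕ), γ = k / (primeProd p : ℚ) ^ N := by
  constructor
  · rintro ⟨n, ν, rfl⟩
    obtain ⟨k, N, hk⟩ := exists_prod_zpow_eq_div (p := p) ν
    exact ⟨n * k, N, by rw [hk]; push_cast; ring⟩
  · rintro ⟨k, N, rfl⟩
    refine ⟨k, fun _ => -N, ?_⟩
    simp [primeProd, div_eq_mul_inv, Finset.prod_pow]

/-- The set `P⁻¹ℤ` as a subring of `ℚ`. Coprimality of a pair in the sense of `CoprimePair` is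
comaximality in this ring. -/
def pinvSubring (p : Fin r → ℕ) [∀ i, Fact (p i).Prime] : Subring ℚ where
  carrier := PinvZ r p
  mul_mem' := by
    simp only [mem_PinvZ_iff]
    rintro _ _ ⟨k, N, rfl⟩ ⟨l, M, rfl⟩
    exact ⟨k * l, N + M, by push_cast; field⟩
  one_mem' := mem_PinvZ_iff.2 ⟨1, 0, by simp⟩
  add_mem' := by
    simp only [mem_PinvZ_iff]
    rintro _ _ ⟨k, N, rfl⟩ ⟨l, M, rfl⟩
    have := primeProd_ne_zero (p := p)
    exact ⟨k * primeProd p ^ M + l * primeProd p ^ N, N + M, by push_cast; field_simp; ring⟩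
  zero_mem' := mem_PinvZ_iff.2 ⟨0, 0, by simp⟩
  neg_mem' := by
    simp only [mem_PinvZ_iff]
    rintro _ ⟨k, N, rfl⟩
    exact ⟨-k, N, by push_cast; ring⟩

lemma prod_zpow_mem (ν : Fin r → ℤ) : ∏ i, (p i : ℚ) ^ ν i ∈ pinvSubring p :=
  ⟨1, ν, by simp⟩

lemma isUnit_prod_zpow (ν : Fin r → ℤ) :
    IsUnit (⟨∏ i, (p i : ℚ) ^ ν i, prod_zpow_mem ν⟩ : pinvSubring p) := by
  refine .of_mul_eq_one ⟨∏ i, (p i : ℚ) ^ (-ν) i, prod_zpow_mem (-ν)⟩ (Subtype.ext ?_)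
  simp [mul_inv_cancel₀ (prod_zpow_ne_zero ν)]

lemma div_primeProd_pow_mem (k : ℤ) (N : ℕ) : (k : ℚ) / (primeProd p : ℚ) ^ N ∈ pinvSubring p :=
  mem_PinvZ_iff.2 ⟨k, N, rfl⟩

lemma exists_mul_primeProd_pow_eq_intCast (a : pinvSubring p) :
    ∃ (k : ℤ) (N : ℕ), a * (primeProd p : pinvSubring p) ^ N = k := by
  obtain ⟨k, N, hk⟩ := mem_PinvZ_iff.1 a.2
  refine ⟨k, N, Subtype.ext ?_⟩
  push_cast
  rw [hk, div_mul_cancel₀ _ (pow_ne_zero _ primeProd_ne_zero)]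

lemma isUnit_primeProd : IsUnit (primeProd p : pinvSubring p) := by
  refine .of_mul_eq_one ⟨_, div_primeProd_pow_mem 1 1⟩ (Subtype.ext ?_)
  simp [mul_inv_cancel₀ (primeProd_ne_zero (p := p))]

lemma exists_intCast_eq_of_norm_le_one {a : ℚ} (ha : a ∈ pinvSubring p)
    (hnorm : ∀ i, ‖(a : ℚ_[p i])‖ ≤ 1) : ∃ k : ℤ, a = k := by
  obtain ⟨k, N, hk⟩ := mem_PinvZ_iff.1 ha
  have hden : a.den ∣ primeProd p ^ N := by
    have := Rat.den_dvd k (primeProd p ^ N)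
    rw [Rat.divInt_eq_div] at this
    push_cast at this
    rw [← hk] at this
    exact_mod_cast this
  refine ⟨a.num, (Rat.den_eq_one_iff a).1 ?_ |>.symm⟩
  refine Nat.eq_one_iff_not_exists_prime_dvd.2 fun q hq hqa => ?_
  obtain ⟨i, -, hqi⟩ := (Prime.dvd_finsetProd_iff hq.prime _).1
    (hq.dvd_of_dvd_pow (hqa.trans hden))
  rw [(Nat.prime_dvd_prime_iff_eq hq Fact.out).1 hqi] at hqa
  have hunit := PadicInt.isUnit_iff.1 (PadicInt.isUnit_den a (hnorm i))
  rw [PadicInt.norm_natCast_eq_one_iff, Nat.Prime.coprime_iff_not_dvd Fact.out] at hunit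
  exact hunit hqa

lemma norm_intCast_eq_one_of_not_dvd {m : ℤ} (i : Fin r) (hm : ¬ (p i : ℤ) ∣ m) :
    ‖(m : ℚ_[p i])‖ = 1 :=
  (Padic.norm_int_le_one m).eq_of_not_lt fun h => hm (Padic.norm_intCast_lt_one_iff.1 h)

lemma norm_prod_zpow (hinj : Function.Injective p) (ν : Fin r → ℤ) (i : Fin r) :
    ‖((∏ j, (p j : ℚ) ^ ν j : ℚ) : ℚ_[p i])‖ = (p i : ℝ) ^ (-ν i) := by
  push_cast
  rw [norm_prod, Finset.prod_eq_single i]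
  · rw [norm_zpow, Padic.norm_p, inv_zpow, zpow_neg]
  · intro j _ hj
    have hcop := (Nat.coprime_primes Fact.out Fact.out).2 fun h => hj (hinj h).symm
    rw [norm_zpow, Padic.norm_natCast_eq_one_iff.2 hcop, one_zpow]
  · simp

lemma exists_eq_intCast_mul_prod_zpow (hinj : Function.Injective p) {γ : ℚ}
    (hγ : γ ∈ pinvSubring p) (hγ0 : γ ≠ 0) :
    ∃ (m : ℤ) (ν : Fin r → ℤ), γ = m * ∏ i, (p i : ℚ) ^ ν i ∧ ∀ i, ¬ (p i : ℤ) ∣ m := by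
  set ν : Fin r → ℤ := fun i => (γ : ℚ_[p i]).valuation
  have hnorm (i : Fin r) : ‖((γ * ∏ j, (p j : ℚ) ^ (-ν) j : ℚ) : ℚ_[p i])‖ = 1 := by
    have hp : (p i : ℝ) ≠ 0 := Nat.cast_ne_zero.2 (Fact.out : (p i).Prime).ne_zero
    rw [Rat.cast_mul, norm_mul, norm_prod_zpow hinj,
      Padic.norm_eq_zpow_neg_valuation (Rat.cast_ne_zero.2 hγ0), ← zpow_add₀ hp]
    simp [ν]
  obtain ⟨m, hm⟩ := exists_intCast_eq_of_norm_le_one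
    (mul_mem hγ (prod_zpow_mem (-ν))) fun i => (hnorm i).le
  refine ⟨m, ν, ?_, fun i hi => ?_⟩
  · have hinv : ∏ i, (p i : ℚ) ^ (-ν) i = (∏ i, (p i : ℚ) ^ ν i)⁻¹ := by simp
    rw [← hm, hinv, inv_mul_cancel_right₀ (prod_zpow_ne_zero ν)]
  · have := hnorm i
    rw [hm, Rat.cast_intCast] at this
    exact (Padic.norm_intCast_lt_one_iff.2 hi).ne this

/-- For `γ = n p_1^{ν_1} ⋯ p_r^{ν_r}` with `n` coprime to the `p_i`, this is `|n|`. -/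
noncomputable def content (p : Fin r → ℕ) [∀ i, Fact (p i).Prime] (γ : ℚ) : ℝ :=
  |(γ : ℝ)| * ∏ i, ‖(γ : ℚ_[p i])‖

lemma content_intCast_mul_prod_zpow (hinj : Function.Injective p) {m : ℤ} (ν : Fin r → ℤ)
    (hm : ∀ i, ¬ (p i : ℤ) ∣ m) : content p (m * ∏ i, (p i : ℚ) ^ ν i) = |(m : ℝ)| := by
  have hfactor (i : Fin r) : |(p i : ℝ) ^ ν i| * (p i : ℝ) ^ (-ν i) = 1 := by
    have hp : (0 : ℝ) < p i := Nat.cast_pos.2 (Fact.out : (p i).Prime).pos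
    rw [abs_of_pos (zpow_pos hp _), ← zpow_add₀ hp.ne', add_neg_cancel, zpow_zero]
  simp_rw [content, Rat.cast_mul, norm_mul, norm_prod_zpow hinj, Rat.cast_intCast,
    norm_intCast_eq_one_of_not_dvd _ (hm _), one_mul]
  push_cast
  rw [abs_mul, mul_assoc, Finset.abs_prod, ← Finset.prod_mul_distrib]
  simp_rw [hfactor, Finset.prod_const_one, mul_one]

lemma content_mul (β γ : ℚ) : content p (β * γ) = content p β * content p γ := by
  simp only [content, Rat.cast_mul, abs_mul, norm_mul, Finset.prod_mul_distrib]
  ring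

lemma content_pos {γ : ℚ} (hγ0 : γ ≠ 0) : 0 < content p γ :=
  mul_pos (abs_pos.2 (Rat.cast_ne_zero.2 hγ0))
    (Finset.prod_pos fun _ _ => norm_pos_iff.2 (Rat.cast_ne_zero.2 hγ0))

lemma one_le_content (hinj : Function.Injective p) {γ : ℚ} (hγ : γ ∈ pinvSubring p)
    (hγ0 : γ ≠ 0) : 1 ≤ content p γ := by
  obtain ⟨m, ν, rfl, hm⟩ := exists_eq_intCast_mul_prod_zpow hinj hγ hγ0
  rw [content_intCast_mul_prod_zpow hinj ν hm]
  have hm0 : m ≠ 0 := by rintro rfl; simp at hγ0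
  exact_mod_cast Int.one_le_abs hm0

lemma content_le_one_of_isUnit (hinj : Function.Injective p) {γ : pinvSubring p} (hγ : IsUnit γ) :
    content p γ ≤ 1 := by
  obtain ⟨u, rfl⟩ := hγ
  have hinv := one_le_content hinj (u⁻¹ : (pinvSubring p)ˣ).1.2 (by simp)
  have hmul : content p (u : pinvSubring p) * content p (u⁻¹ : (pinvSubring p)ˣ).1 = 1 := by
    rw [← content_mul, ← Subring.coe_mul, Units.mul_inv]
    simp [content]
  refine hmul ▸ le_mul_of_one_le_right ?_ hinv
  unfold content
  positivity

lemma dvd_factorial_of_content_le (hinj : Function.Injective p) {γ : pinvSubring p} (hγ0 : γ ≠ 0)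
    {N : ℕ} (hN : content p γ ≤ N) : γ ∣ N.factorial := by
  obtain ⟨m, ν, hγ, hm⟩ := exists_eq_intCast_mul_prod_zpow hinj γ.2 (by simpa using hγ0)
  have hm0 : m ≠ 0 := by rintro rfl; exact hγ0 (Subtype.ext (by simpa using hγ))
  rw [hγ, content_intCast_mul_prod_zpow hinj ν hm] at hN
  have hmN : m.natAbs ≤ N := by
    rw [← Nat.cast_le (α := ℝ), Nat.cast_natAbs]
    exact_mod_cast hN
  have hdvd : m ∣ N.factorial :=
    Int.natAbs_dvd.1 (Int.natCast_dvd_natCast.2 (Nat.dvd_factorial (Int.natAbs_pos.2 hm0) hmN))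
  have heq : γ = m * ⟨_, prod_zpow_mem ν⟩ := Subtype.ext (by push_cast; exact hγ)
  rw [heq, (isUnit_prod_zpow ν).mul_right_dvd]
  exact_mod_cast map_dvd (Int.castRingHom (pinvSubring p)) hdvd

lemma isCoprime_of_isCoprime_intCast {m n : ℤ} (hm : ∀ i, ¬ (p i : ℤ) ∣ m)
    (h : IsCoprime (m : pinvSubring p) n) : IsCoprime m n := by
  obtain ⟨a, b, hab⟩ := h
  obtain ⟨k, N, hk⟩ := exists_mul_primeProd_pow_eq_intCast a
  obtain ⟨l, M, hl⟩ := exists_mul_primeProd_pow_eq_intCast b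
  have hpow : (primeProd p : ℤ) ^ (N + M) =
      n * (l * (primeProd p : ℤ) ^ N) + m * (k * (primeProd p : ℤ) ^ M) := by
    rw [← Int.cast_inj (α := pinvSubring p)]
    push_cast
    rw [← hk, ← hl]
    linear_combination -(primeProd p : pinvSubring p) ^ (N + M) * hab
  have hcop : IsCoprime m ((primeProd p : ℤ) ^ (N + M)) := by
    refine IsCoprime.pow_right ?_
    rw [primeProd, Nat.cast_prod]
    refine IsCoprime.prod_right fun i _ => ?_
    exact ((Nat.prime_iff_prime_int.1 Fact.out).coprime_iff_not_dvd.2 (hm i)).symm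
  rw [hpow] at hcop
  exact (IsCoprime.add_mul_left_right_iff.1 hcop).of_mul_right_left

lemma CoprimePair.isCoprime {β γ : pinvSubring p} (h : CoprimePair r p β γ) : IsCoprime β γ := by
  obtain ⟨m, n, μ, ν, hβ, hγ, -, -, hmn⟩ := h
  have heqβ : β = m * ⟨_, prod_zpow_mem μ⟩ := Subtype.ext (by push_cast; exact hβ)
  have heqγ : γ = n * ⟨_, prod_zpow_mem ν⟩ := Subtype.ext (by push_cast; exact hγ)
  rw [heqβ, heqγ, isCoprime_mul_unit_right_left (isUnit_prod_zpow μ),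
    isCoprime_mul_unit_right_right (isUnit_prod_zpow ν)]
  exact hmn.intCast

lemma coprimePair_of_isCoprime (hinj : Function.Injective p) {β γ : pinvSubring p}
    (hβ0 : β ≠ 0) (hγ0 : γ ≠ 0) (h : IsCoprime β γ) : CoprimePair r p β γ := by
  obtain ⟨m, μ, hβ, hm⟩ := exists_eq_intCast_mul_prod_zpow hinj β.2 (by simpa using hβ0)
  obtain ⟨n, ν, hγ, hn⟩ := exists_eq_intCast_mul_prod_zpow hinj γ.2 (by simpa using hγ0)
  have heqβ : β = m * ⟨_, prod_zpow_mem μ⟩ := Subtype.ext (by push_cast; exact hβ)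
  have heqγ : γ = n * ⟨_, prod_zpow_mem ν⟩ := Subtype.ext (by push_cast; exact hγ)
  rw [heqβ, heqγ, isCoprime_mul_unit_right_left (isUnit_prod_zpow μ),
    isCoprime_mul_unit_right_right (isUnit_prod_zpow ν)] at h
  exact ⟨m, n, μ, ν, hβ, hγ, hm, hn, isCoprime_of_isCoprime_intCast hm h⟩

lemma isCoprime_prime_of_not_dvd {q : ℕ} (hq : q.Prime) {γ : pinvSubring p}
    (h : ¬ (q : pinvSubring p) ∣ γ) : IsCoprime (q : pinvSubring p) γ := by
  obtain ⟨k, N, hk⟩ := exists_mul_primeProd_pow_eq_intCast γ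
  have hunit : IsUnit ((primeProd p : pinvSubring p) ^ N) := isUnit_primeProd.pow N
  rw [← isCoprime_mul_unit_right_right hunit, hk]
  have hqk : ¬ (q : ℤ) ∣ k := fun hd => h <| by
    rw [← hunit.dvd_mul_right, hk]
    exact_mod_cast map_dvd (Int.castRingHom (pinvSubring p)) hd
  exact_mod_cast ((Nat.prime_iff_prime_int.1 hq).coprime_iff_not_dvd.2 hqk).intCast

lemma finite_setOf_mem_PinvZ_norm_le (A : ℝ) (B : Fin r → ℝ) :
    {a : ℚ | a ∈ PinvZ r p ∧ |(a : ℝ)| ≤ A ∧ ∀ i, ‖(a : ℚ_[p i])‖ ≤ B i}.Finite := by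
  obtain ⟨N, hN⟩ := exists_norm_primeProd_pow_mul_lt p B one_pos
  set Q : ℚ := (primeProd p : ℚ) ^ N with hQ
  have hQ0 : Q ≠ 0 := pow_ne_zero _ primeProd_ne_zero
  refine ((finite_Icc (-⌊A * Q⌋) ⌊A * Q⌋).image fun k : ℤ => (k : ℚ) / Q).subset ?_
  rintro a ⟨ha, hreal, hpadic⟩
  obtain ⟨k, hk⟩ := exists_intCast_eq_of_norm_le_one
    (mul_mem ha (pow_mem (natCast_mem (pinvSubring p) _) N)) fun i => by
      push_cast
      rw [norm_mul, norm_pow, mul_comm]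
      exact (mul_le_mul_of_nonneg_left (hpadic i) (by positivity)).trans (hN i).le
  refine ⟨k, ?_, by simp only [← hk]; exact mul_div_cancel_right₀ _ hQ0⟩
  have hkB : |(k : ℝ)| ≤ A * Q := by
    rw [← Rat.cast_intCast, ← hk, hQ]
    push_cast
    rw [abs_mul, abs_of_nonneg (by positivity : (0 : ℝ) ≤ primeProd p ^ N)]
    gcongr
  rw [← Int.cast_abs] at hkB
  exact abs_le.1 (Int.le_floor.2 hkB)

end Arithmetic

section DiagonalEmbedding

variable {r : ℕ} {p : Fin r → ℕ} [∀ i, Fact (p i).Prime]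

lemma iota_add (a b : ℚ) : iota r p (a + b) = iota r p a + iota r p b := by
  ext <;> simp [iota]

lemma iota_neg (a : ℚ) : iota r p (-a) = -iota r p a := by
  ext <;> simp [iota]

lemma smulQ_add (a : ℚ) (x y : QP r p) :
    smulQ r p a (x + y) = smulQ r p a x + smulQ r p a y := by
  ext <;> simp [smulQ, mul_add]

lemma smulQ_iota (a b : ℚ) : smulQ r p a (iota r p b) = iota r p (a * b) := by
  ext <;> simp [smulQ, iota]

lemma exists_nat_norm_sub_le (hinj : Function.Injective p) (y : (i : Fin r) → ℤ_[p i]) (N : ℕ) :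
    ∃ a : ℕ, ∀ i, ‖y i - a‖ ≤ (p i : ℝ) ^ (-N : ℤ) := by
  obtain ⟨a, ha⟩ := Nat.chineseRemainderOfFinset (fun i => (y i).appr N) (fun i => p i ^ N)
    Finset.univ (fun i _ => pow_ne_zero _ (Fact.out : (p i).Prime).ne_zero)
    fun i _ j _ hij => ((Nat.coprime_primes Fact.out Fact.out).2 (hinj.ne hij)).pow _ _
  refine ⟨a, fun i => (PadicInt.norm_le_pow_iff_mem_span_pow _ _).2 ?_⟩
  obtain ⟨t, ht⟩ := Nat.modEq_iff_dvd.1 (ha i (Finset.mem_univ i))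
  have hmod : ((y i).appr N : ℤ_[p i]) - a ∈ Ideal.span {(p i : ℤ_[p i]) ^ N} :=
    Ideal.mem_span_singleton.2 ⟨t, by exact_mod_cast congrArg (Int.cast (R := ℤ_[p i])) ht⟩
  simpa using add_mem (PadicInt.appr_spec N (y i)) hmod

lemma exists_mem_PinvZ_norm_sub_lt (hinj : Function.Injective p) (y : (i : Fin r) → ℚ_[p i])
    {ε : ℝ} (hε : 0 < ε) : ∃ a ∈ PinvZ r p, ∀ i, ‖y i - (a : ℚ)‖ < ε := by
  obtain ⟨K, hK⟩ := exists_norm_primeProd_pow_mul_lt p (fun i => ‖y i‖) one_pos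
  have hQ (i : Fin r) : (primeProd p : ℚ_[p i]) ≠ 0 := Nat.cast_ne_zero.2 primeProd_pos.ne'
  have hint (i : Fin r) : ‖y i * (primeProd p : ℚ_[p i]) ^ K‖ ≤ 1 := by
    rw [norm_mul, norm_pow, mul_comm]
    exact (hK i).le
  obtain ⟨N, hN⟩ : ∃ N : ℕ, ∀ i, (p i : ℝ) ^ (-N : ℤ) < ε * ‖(primeProd p : ℚ_[p i])‖ ^ K := by
    suffices h : ∀ᶠ N : ℕ in atTop, ∀ i,
      (p i : ℝ) ^ (-N : ℤ) < ε * ‖(primeProd p : ℚ_[p i])‖ ^ K from h.exists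
    refine eventually_all.2 fun i => ?_
    have hlim := tendsto_pow_atTop_nhds_zero_of_lt_one (norm_nonneg _)
      (Padic.norm_p_lt_one (p := p i))
    simp_rw [Padic.norm_p, inv_pow, ← zpow_natCast, ← zpow_neg] at hlim
    have := norm_pos_iff.2 (hQ i)
    exact hlim.eventually (gt_mem_nhds (by positivity))
  obtain ⟨a, ha⟩ := exists_nat_norm_sub_le hinj (fun i => ⟨_, hint i⟩) N
  refine ⟨_, div_primeProd_pow_mem a K, fun i => ?_⟩
  have hdiv : y i - (((a : ℤ) / (primeProd p : ℚ) ^ K : ℚ) : ℚ_[p i]) =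
      (y i * (primeProd p : ℚ_[p i]) ^ K - a) / (primeProd p : ℚ_[p i]) ^ K := by
    have := hQ i
    push_cast
    field
  rw [hdiv, norm_div, norm_pow, div_lt_iff₀ (pow_pos (norm_pos_iff.2 (hQ i)) K)]
  exact (ha i).trans_lt (hN i)

lemma exists_iota_add_mem_ZP (hinj : Function.Injective p) (x : QP r p) :
    ∃ a ∈ PinvZ r p, iota r p a + x ∈ ZP r p := by
  obtain ⟨a, ha, hx⟩ := exists_mem_PinvZ_norm_sub_lt hinj x.2 one_pos
  have hmem : -a - ⌊x.1 - a⌋ ∈ pinvSubring p := sub_mem (neg_mem ha) (intCast_mem _ _)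
  refine ⟨_, hmem, ?_, fun i => ?_⟩
  · have hfract : (iota r p (-a - ⌊x.1 - a⌋) + x).1 = Int.fract (x.1 - a) := by
      simp only [iota, Prod.fst_add, Int.fract]
      push_cast
      ring
    rw [hfract]
    exact ⟨Int.fract_nonneg _, Int.fract_lt_one _⟩
  · have hsplit : (iota r p (-a - ⌊x.1 - a⌋) + x).2 i =
        (x.2 i - a) + ((-⌊x.1 - a⌋ : ℤ) : ℚ_[p i]) := by
      simp only [iota, Prod.snd_add, Pi.add_apply]
      push_cast
      ring
    rw [hsplit]
    exact (Padic.nonarchimedean _ _).trans (max_le (hx i).le (Padic.norm_int_le_one _))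

lemma dense_setOf_iota_div (hinj : Function.Injective p) {𝒟 : Set ℕ}
    (hcop : ∀ D ∈ 𝒟, D.Coprime (primeProd p)) (hinf : 𝒟.Infinite) :
    Dense {g : QP r p | ∃ D ∈ 𝒟, ∃ a ∈ PinvZ r p, g = iota r p (a / D)} := by
  rw [Metric.dense_iff]
  intro x ε hε
  obtain ⟨a, ha, hxa⟩ := exists_mem_PinvZ_norm_sub_lt hinj x.2 hε
  obtain ⟨N, hN⟩ := exists_norm_primeProd_pow_mul_lt p (fun _ => 1) hε
  set M : ℚ := (primeProd p : ℚ) ^ N with hM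
  have hM0 : (0 : ℝ) < M := by
    rw [hM]
    exact_mod_cast pow_pos (primeProd_pos (p := p)) N
  obtain ⟨D, hD, hDlt⟩ := hinf.exists_gt ⌈(M : ℝ) / ε⌉₊
  have hDM : (M : ℝ) / ε < D := Nat.lt_of_ceil_lt hDlt
  have hD0 : (0 : ℝ) < D := (by positivity : (0 : ℝ) ≤ M / ε).trans_lt hDM
  have hDQ : (D : ℚ) ≠ 0 := by exact_mod_cast hD0.ne'
  set b : ℤ := round ((x.1 - a) * D / M)
  have hmem : a * D + b * M ∈ pinvSubring p :=
    add_mem (mul_mem ha (natCast_mem _ _)) (mul_mem (intCast_mem _ _) (pow_mem (natCast_mem _ _) _))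
  have hquot : (a * D + b * M) / D = a + b * M / D := by field
  refine ⟨_, ?_, D, hD, _, hmem, rfl⟩
  rw [hquot, Metric.mem_ball, dist_comm, Prod.dist_eq]
  refine max_lt ?_ ((dist_pi_lt_iff hε).2 fun i => ?_)
  · have herr : x.1 - (iota r p (a + b * M / D)).1 = ((x.1 - a) * D / M - b) * (M / D) := by
      simp only [iota]
      push_cast
      field
    rw [Real.dist_eq, herr, abs_mul, abs_of_pos (by positivity : 0 < (M : ℝ) / D)]
    have hround := abs_sub_round ((x.1 - a) * D / M)
    have hlt : (M : ℝ) / D < ε := (div_lt_comm₀ hε hD0).1 hDM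
    have hpos : 0 < (M : ℝ) / D := by positivity
    nlinarith
  · have herr : x.2 i - (iota r p (a + b * M / D)).2 i = (x.2 i - a) + -(b * M / D : ℚ) := by
      simp only [iota]
      push_cast
      ring
    rw [dist_eq_norm, herr]
    refine (Padic.nonarchimedean _ _).trans_lt (max_lt (hxa i) ?_)
    rw [norm_neg, hM]
    push_cast
    rw [norm_div, norm_natCast_eq_one_of_coprime_primeProd (hcop D hD), div_one, norm_mul, norm_pow]
    refine (mul_le_of_le_one_left (by positivity) (Padic.norm_int_le_one b)).trans_lt ?_
    simpa using hN i

end DiagonalEmbedding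

section HaarMeasure

instance (q : ℕ) [Fact q.Prime] : (padicHaar q).IsAddHaarMeasure := by
  unfold padicHaar
  infer_instance

lemma padicHaar_closedBall_zero_one (q : ℕ) [Fact q.Prime] :
    padicHaar q (Metric.closedBall 0 1) = 1 :=
  Measure.addHaarMeasure_self

lemma measurePreserving_mul_left_padicHaar {q : ℕ} [Fact q.Prime] {u : ℚ_[q]} (hu : ‖u‖ = 1) :
    MeasurePreserving (u * ·) (padicHaar q) (padicHaar q) := by
  have hu0 : u ≠ 0 := norm_ne_zero_iff.1 (hu ▸ one_ne_zero)
  refine ⟨by fun_prop, ?_⟩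
  have : (Measure.map (u * ·) (padicHaar q)).IsAddHaarMeasure :=
    AddEquiv.isAddHaarMeasure_map (padicHaar q) (DistribMulAction.toAddEquiv₀ ℚ_[q] u hu0)
      (continuous_const_mul u) (continuous_const_mul u⁻¹)
  refine ((Measure.addHaarMeasure_eq_iff _ _).2 ?_).symm
  change Measure.map (u * ·) (padicHaar q) (Metric.closedBall 0 1) = 1
  have hball : (u * ·) ⁻¹' Metric.closedBall 0 1 = Metric.closedBall (0 : ℚ_[q]) 1 := by
    ext x
    simp [hu]
  rw [Measure.map_apply (by fun_prop) measurableSet_closedBall, hball,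
    padicHaar_closedBall_zero_one]

variable {r : ℕ} {p : Fin r → ℕ} [∀ i, Fact (p i).Prime]

instance : (lamP r p).IsAddHaarMeasure := by
  unfold lamP
  infer_instance

lemma measurable_smulQ (a : ℚ) : Measurable (smulQ r p a) := by
  unfold smulQ
  fun_prop

lemma map_smulQ_lamP {q : ℕ} (hq0 : q ≠ 0) (hq : q.Coprime (primeProd p)) :
    Measure.map (smulQ r p q) (lamP r p) = (q : ENNReal)⁻¹ • lamP r p := by
  have hpadic : MeasurePreserving (fun (y : (i : Fin r) → ℚ_[p i]) i => (q : ℚ_[p i]) * y i)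
      (Measure.pi fun i => padicHaar (p i)) (Measure.pi fun i => padicHaar (p i)) :=
    measurePreserving_pi _ _ fun i =>
      measurePreserving_mul_left_padicHaar (norm_natCast_eq_one_of_coprime_primeProd hq i)
  have hprod : smulQ r p q = Prod.map (fun x : ℝ => (q : ℝ) * x)
      (fun (y : (i : Fin r) → ℚ_[p i]) i => (q : ℚ_[p i]) * y i) := by
    funext x
    simp [smulQ, Prod.map]
  have hq' : (0 : ℝ) < q := Nat.cast_pos.2 hq0.bot_lt
  rw [lamP, hprod, ← Measure.map_prod_map _ _ (by fun_prop) hpadic.measurable, hpadic.map_eq,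
    Real.map_volume_mul_left hq'.ne', Measure.prod_smul_left, abs_of_pos (by positivity),
    ENNReal.ofReal_inv_of_pos hq', ENNReal.ofReal_natCast]

lemma ZP_eq_prod :
    ZP r p = Ico 0 1 ×ˢ univ.pi fun i => Metric.closedBall (0 : ℚ_[p i]) 1 := by
  ext x
  simp [ZP]

lemma measurableSet_ZP : MeasurableSet (ZP r p) := by
  rw [ZP_eq_prod]
  exact measurableSet_Ico.prod (.univ_pi fun i => measurableSet_closedBall)

lemma lamP_ZP : lamP r p (ZP r p) = 1 := by
  simp [ZP_eq_prod, lamP, Measure.prod_prod, Measure.pi_pi, padicHaar_closedBall_zero_one]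

lemma ae_ne_ratCast : ∀ᵐ x : QP r p ∂lamP r p, ∀ z : ℚ, x.1 ≠ z ∧ ∀ i, x.2 i ≠ z := by
  refine ae_all_iff.2 fun z => ?_
  refine .and ?_ (ae_all_iff.2 fun i => ?_)
  · exact Measure.quasiMeasurePreserving_fst.ae (Measure.ae_ne volume (z : ℝ))
  · have hne := Measure.ae_eval_ne (fun i => padicHaar (p i)) i (z : ℚ_[p i])
    exact Measure.quasiMeasurePreserving_snd.ae hne

end HaarMeasure

section DiagonalPeriodicity

variable {r : ℕ} {p : Fin r → ℕ} [∀ i, Fact (p i).Prime] {U : Set (QP r p)} {q : ℕ}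

/-- Invariance under the translations by `ι(P⁻¹ℤ)`; such a set is determined by its trace on the
fundamental domain `ℤ_P`. -/
def DiagPeriodic (U : Set (QP r p)) : Prop :=
  ∀ a ∈ PinvZ r p, ∀ x ∈ U, iota r p a + x ∈ U

lemma DiagPeriodic.iota_add_mem_iff (hU : DiagPeriodic U) {a : ℚ} (ha : a ∈ PinvZ r p)
    {x : QP r p} : iota r p a + x ∈ U ↔ x ∈ U := by
  refine ⟨fun h => ?_, hU a ha x⟩
  have hneg : -a ∈ pinvSubring p := neg_mem ha
  simpa [iota_neg] using hU (-a) hneg _ h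

lemma DiagPeriodic.sdiff {V : Set (QP r p)} (hU : DiagPeriodic U) (hV : DiagPeriodic V) :
    DiagPeriodic (U \ V) := fun a ha x hx =>
  ⟨hU a ha x hx.1, fun h => hx.2 ((hV.iota_add_mem_iff ha).1 h)⟩

lemma DiagPeriodic.preimage_smulQ (hU : DiagPeriodic U) (q : ℕ) :
    DiagPeriodic (smulQ r p q ⁻¹' U) := by
  intro a ha x hx
  have hmem : q * a ∈ pinvSubring p := mul_mem (natCast_mem _ _) ha
  rw [mem_preimage, smulQ_add, smulQ_iota]
  exact hU _ hmem _ hx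

lemma DiagPeriodic.measure_eq_zero (hinj : Function.Injective p) (hU : DiagPeriodic U)
    (h : lamP r p (ZP r p ∩ U) = 0) : lamP r p U = 0 := by
  have hcover : U ⊆ ⋃ a : pinvSubring p, (iota r p a + ·) ⁻¹' (ZP r p ∩ U) := by
    intro x hx
    obtain ⟨a, ha, hxa⟩ := exists_iota_add_mem_ZP hinj x
    exact mem_iUnion.2 ⟨⟨a, ha⟩, hxa, hU a ha x hx⟩
  refine measure_mono_null hcover (measure_iUnion_null fun a => ?_)
  rw [measure_preimage_add, h]

lemma DiagPeriodic.measure_ZP_inter_preimage_smulQ_le (hU : DiagPeriodic U)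
    (hUm : MeasurableSet U) (hq0 : q ≠ 0) (hq : q.Coprime (primeProd p)) :
    lamP r p (ZP r p ∩ smulQ r p q ⁻¹' U) ≤ lamP r p (ZP r p ∩ U) := by
  have hqpos : (0 : ℝ) < q := Nat.cast_pos.2 hq0.bot_lt
  set V := ⋃ j ∈ Finset.range q, (iota r p ((-j : ℤ) : ℚ) + ·) ⁻¹' (ZP r p ∩ U)
  have hVm : MeasurableSet V := Finset.measurableSet_biUnion _ fun j _ =>
    measurable_const_add _ (measurableSet_ZP.inter hUm)
  have hsub : ZP r p ∩ smulQ r p q ⁻¹' U ⊆ smulQ r p q ⁻¹' V := by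
    rintro x ⟨⟨hx, hxi⟩, hxU⟩
    have hfloor : (⌊q * x.1⌋₊ : ℝ) ≤ q * x.1 := Nat.floor_le (mul_nonneg hqpos.le hx.1)
    have hlt : ⌊q * x.1⌋₊ < q := (Nat.floor_lt' hq0).2 (mul_lt_of_lt_one_right hqpos hx.2)
    refine mem_iUnion₂.2 ⟨⌊q * x.1⌋₊, Finset.mem_range.2 hlt, ⟨?_, fun i => ?_⟩, ?_⟩
    · have := Nat.lt_floor_add_one (q * x.1)
      simp only [iota, smulQ, Prod.fst_add, mem_Ico]
      push_cast
      constructor <;> linarith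
    · simp only [iota, smulQ, Prod.snd_add, Pi.add_apply]
      refine (Padic.nonarchimedean _ _).trans (max_le ?_ ?_)
      · exact_mod_cast Padic.norm_int_le_one _
      · push_cast
        rw [norm_mul, norm_natCast_eq_one_of_coprime_primeProd hq, one_mul]
        exact hxi i
    · exact hU _ (intCast_mem (pinvSubring p) _) _ hxU
  calc lamP r p (ZP r p ∩ smulQ r p q ⁻¹' U)
      ≤ lamP r p (smulQ r p q ⁻¹' V) := measure_mono hsub
    _ = (q : ENNReal)⁻¹ * lamP r p V := by
        rw [← Measure.map_apply (measurable_smulQ _) hVm, map_smulQ_lamP hq0 hq]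
        rfl
    _ ≤ (q : ENNReal)⁻¹ * (q * lamP r p (ZP r p ∩ U)) := by
        gcongr
        refine (measure_biUnion_finset_le _ _).trans ?_
        simp only [measure_preimage_add, Finset.sum_const, Finset.card_range, nsmul_eq_mul, le_refl]
    _ = lamP r p (ZP r p ∩ U) := by
        rw [← mul_assoc, ENNReal.inv_mul_cancel (by simpa using hq0) (by simp), one_mul]

lemma DiagPeriodic.ae_mem_of_smulQ_mem (hinj : Function.Injective p) (hU : DiagPeriodic U)
    (hUm : MeasurableSet U) (hq0 : q ≠ 0) (hq : q.Coprime (primeProd p))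
    (hUq : ∀ x ∈ U, smulQ r p q x ∈ U) : ∀ᵐ x ∂lamP r p, smulQ r p q x ∈ U → x ∈ U := by
  have hnull : lamP r p (smulQ r p q ⁻¹' U \ U) = 0 := by
    refine ((hU.preimage_smulQ q).sdiff hU).measure_eq_zero hinj ?_
    have hsub : U ⊆ smulQ r p q ⁻¹' U := hUq
    have hfin : lamP r p (ZP r p ∩ U) ≠ ⊤ :=
      measure_ne_top_of_subset inter_subset_left (by simp [lamP_ZP])
    rw [inter_sdiff_distrib_left, measure_sdiff (inter_subset_inter_right _ hsub)
      (measurableSet_ZP.inter hUm).nullMeasurableSet hfin]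
    exact tsub_eq_zero_of_le (hU.measure_ZP_inter_preimage_smulQ_le hUm hq0 hq)
  refine measure_mono_null (fun x hx => ?_) hnull
  exact Classical.not_imp.1 hx

/-- Ergodicity of multiplication by `q` on the solenoid `ℚ_P / ι(P⁻¹ℤ)`: up to a null set `U` is
also invariant under the dense group of translations by `ι(P⁻¹ℤ[1/q])`. -/
lemma DiagPeriodic.eventuallyConst_of_smulQ_mem (hinj : Function.Injective p)
    (hU : DiagPeriodic U) (hUm : MeasurableSet U) (hq1 : 1 < q) (hq : q.Coprime (primeProd p))
    (hUq : ∀ x ∈ U, smulQ r p q x ∈ U) : EventuallyConst U (ae (lamP r p)) := by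
  have hiter (k : ℕ) : ∀ x ∈ U, smulQ r p (q ^ k : ℕ) x ∈ U := by
    induction k with
    | zero => simp [smulQ]
    | succ k ih =>
      intro x hx
      have hsucc : smulQ r p (q ^ (k + 1) : ℕ) x = smulQ r p q (smulQ r p (q ^ k : ℕ) x) := by
        ext <;> simp [smulQ, pow_succ'] <;> ring
      exact hsucc ▸ hUq _ (ih x hx)
  have hcop : ∀ D ∈ range fun k : ℕ => q ^ k, D.Coprime (primeProd p) := by
    rintro _ ⟨k, rfl⟩
    exact hq.pow_left k
  refine eventuallyConst_ae_of_dense_add_mem_imp hUm (dense_setOf_iota_div hinj hcop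
    (infinite_range_of_injective (Nat.pow_right_injective hq1))) ?_
  rintro _ ⟨_, ⟨k, rfl⟩, a, ha, rfl⟩
  have hqk : q ^ k ≠ 0 := pow_ne_zero _ (by lia)
  filter_upwards [hU.ae_mem_of_smulQ_mem hinj hUm hqk (hq.pow_left k) (hiter k)] with x hx hax
  have hmul := hiter k _ hax
  rw [smulQ_add, smulQ_iota, mul_div_cancel₀ _ (Nat.cast_ne_zero.2 hqk),
    hU.iota_add_mem_iff ha] at hmul
  exact hx hmul

lemma DiagPeriodic.eventuallyConst_of_iota_add_smulQ_mem (hinj : Function.Injective p)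
    (hU : DiagPeriodic U) (hUm : MeasurableSet U) (hq1 : 1 < q) (hq : q.Coprime (primeProd p))
    {s : ℚ} (hUq : ∀ x ∈ U, iota r p s + smulQ r p q x ∈ U) :
    EventuallyConst U (ae (lamP r p)) := by
  -- `z` is the fixed point of `x ↦ q x + s`.
  set z : ℚ := -s / (q - 1) with hz
  have hfix : s + q * z = z := by
    have : (q : ℚ) - 1 ≠ 0 := sub_ne_zero.2 (by exact_mod_cast hq1.ne')
    rw [hz]
    field_simp
    ring
  have hconst : EventuallyConst ((iota r p z + ·) ⁻¹' U) (ae (lamP r p)) := by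
    refine DiagPeriodic.eventuallyConst_of_smulQ_mem hinj (fun a ha x hx => ?_)
      (measurable_const_add _ hUm) hq1 hq fun x hx => ?_
    · rw [mem_preimage, add_left_comm]
      exact hU a ha _ hx
    · have := hUq _ hx
      rwa [smulQ_add, smulQ_iota, ← add_assoc, ← iota_add, hfix] at this
  have htend :=
    (measurePreserving_add_left (lamP r p) (-iota r p z)).quasiMeasurePreserving.tendsto_ae
  have hcomp : ((iota r p z + ·) ⁻¹' U) ∘ (-iota r p z + ·) = U :=
    funext fun x => congrArg U (add_neg_cancel_left (iota r p z) x)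
  exact hcomp ▸ hconst.comp_tendsto htend

end DiagonalPeriodicity

section Coprimality

variable {R : Type*} [CommRing R] {a b c : R}

lemma isCoprime_mul_add_mul_self (hb : IsCoprime b (a * c)) (ha : IsCoprime a c) :
    IsCoprime (a * b + c) (a * c) := by
  refine .mul_right ?_ ?_
  · exact (IsCoprime.mul_add_left_left_iff).2 ha.symm
  · simpa using (ha.mul_left hb.of_mul_right_right).add_mul_left_left 1

lemma isCoprime_add_mul_mul_mul_self (hb : IsCoprime b (a * (a * c))) (d : R) :
    IsCoprime (b + d * (a * c)) (a * (a * c)) := by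
  have h := hb.of_mul_right_right.add_mul_right_left d
  exact h.of_mul_right_left.mul_right h

end Coprimality

section LimsupApproximation

variable {r : ℕ} {p : Fin r → ℕ} [∀ i, Fact (p i).Prime]

/-- The filter on `P⁻¹ℤ` of neighbourhoods of infinite content. -/
noncomputable def contentAtTop (p : Fin r → ℕ) [∀ i, Fact (p i).Prime] : Filter (pinvSubring p) :=
  comap (fun γ => content p γ) atTop

instance : (contentAtTop p).IsCountablyGenerated := by
  unfold contentAtTop
  infer_instance

lemma tendsto_content_contentAtTop :
    Tendsto (fun γ : pinvSubring p => content p γ) (contentAtTop p) atTop :=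
  tendsto_comap

lemma eventually_contentAtTop_ne (γ₀ : pinvSubring p) : ∀ᶠ γ in contentAtTop p, γ ≠ γ₀ := by
  filter_upwards [tendsto_content_contentAtTop.eventually_ne_atTop (content p γ₀)] with γ hγ h
  exact hγ (h ▸ rfl)

/-- The box of those `x` with `d(γ·x, ι(β)) ≤ ψ(γ)`, dilated by `c` in the real direction only. -/
def approxBox (ψ : ℚ → ℝ) (c : ℝ) (β γ : ℚ) : Set (QP r p) :=
  {x | |γ * x.1 - β| ≤ c * ψ γ ∧ ∀ i, ‖γ * x.2 i - β‖ ≤ ψ γ}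

/-- The points lying in `approxBox ψ c β γ` for coprime pairs `β, γ` with `γ ∈ S` of arbitrarily
large content. -/
def limsupApprox (ψ : ℚ → ℝ) (S : Set (pinvSubring p)) (c : ℝ) : Set (QP r p) :=
  {x | ∃ᶠ γ in contentAtTop p,
    γ ∈ S ∧ ∃ β : pinvSubring p, IsCoprime β γ ∧ x ∈ approxBox ψ c β γ}

variable {ψ : ℚ → ℝ} {S T : Set (pinvSubring p)} {c C : ℝ} {q : ℕ} {s : ℚ} {x : QP r p}

lemma infinite_setOf_prime_coprime_primeProd :
    {q : ℕ | q.Prime ∧ q.Coprime (primeProd p)}.Infinite := by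
  refine infinite_of_forall_exists_gt fun n => ?_
  obtain ⟨q, hnq, hq⟩ := Nat.exists_infinite_primes (n + primeProd p + 1)
  refine ⟨q, ⟨hq, hq.coprime_iff_not_dvd.2 fun h => ?_⟩, by lia⟩
  have := Nat.le_of_dvd primeProd_pos h
  lia

lemma measurableSet_approxBox (β γ : ℚ) :
    MeasurableSet (approxBox ψ c β γ : Set (QP r p)) := by
  have hreal : IsClosed {x : QP r p | |γ * x.1 - β| ≤ c * ψ γ} :=
    isClosed_le (by fun_prop) continuous_const
  have hpadic (i : Fin r) : IsClosed {x : QP r p | ‖γ * x.2 i - β‖ ≤ ψ γ} :=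
    isClosed_le (by fun_prop) continuous_const
  refine (hreal.inter (isClosed_iInter hpadic)).measurableSet.congr ?_
  ext x
  simp [approxBox]

lemma measurableSet_limsupApprox : MeasurableSet (limsupApprox ψ S c) := by
  have (γ : pinvSubring p) : MeasurableSet
      {x : QP r p | ∃ β : pinvSubring p, IsCoprime β γ ∧ x ∈ approxBox ψ c β γ} := by
    rw [ofPred_exists]
    exact .iUnion fun β => (MeasurableSet.const _).inter (measurableSet_approxBox _ _)
  exact measurableSet_setOf_frequently_mem fun γ => (MeasurableSet.const _).inter (this γ)

lemma limsupApprox_mono (h : S ⊆ T) : limsupApprox ψ S c ⊆ limsupApprox ψ T c :=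
  fun _ hx => hx.mono fun _ hγ => ⟨h hγ.1, hγ.2⟩

lemma limsupApprox_union : limsupApprox ψ (S ∪ T) c = limsupApprox ψ S c ∪ limsupApprox ψ T c := by
  ext x
  simp only [limsupApprox, mem_ofPred_eq, mem_union, ← frequently_or_distrib, or_and_right]

lemma iota_add_smulQ_mem_approxBox (hq : q.Coprime (primeProd p)) {β γ : ℚ}
    (hx : x ∈ approxBox ψ c β γ) :
    iota r p s + smulQ r p q x ∈ approxBox ψ (q * c) (q * β + s * γ) γ := by
  refine ⟨?_, fun i => ?_⟩
  · calc |(γ : ℝ) * (s + (q : ℚ) * x.1) - (q * β + s * γ : ℚ)| = q * |γ * x.1 - β| := by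
          rw [← Nat.abs_cast (R := ℝ) q, ← abs_mul]
          push_cast
          ring_nf
      _ ≤ q * (c * ψ γ) := by gcongr; exact hx.1
      _ = q * c * ψ γ := (mul_assoc _ _ _).symm
  · calc ‖(γ : ℚ_[p i]) * (s + (q : ℚ) * x.2 i) - (q * β + s * γ : ℚ)‖
        = ‖(q : ℚ_[p i])‖ * ‖γ * x.2 i - β‖ := by
          rw [← norm_mul]
          push_cast
          ring_nf
      _ ≤ ψ γ := by
          rw [norm_natCast_eq_one_of_coprime_primeProd hq, one_mul]
          exact hx.2 i

lemma iota_add_smulQ_mem_limsupApprox (hq : q.Coprime (primeProd p))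
    (h : ∀ γ ∈ S, ∀ β, IsCoprime β γ → ∃ β', IsCoprime β' γ ∧ (β' : ℚ) = q * β + s * γ)
    (hx : x ∈ limsupApprox ψ S c) :
    iota r p s + smulQ r p q x ∈ limsupApprox ψ S (q * c) := by
  refine hx.mono fun γ ⟨hγ, β, hβ, hbox⟩ => ?_
  obtain ⟨β', hβ', heq⟩ := h γ hγ β hβ
  exact ⟨hγ, β', hβ', heq ▸ iota_add_smulQ_mem_approxBox hq hbox⟩

lemma iota_add_mem_limsupApprox
    (h : ∀ γ ∈ S, ∀ β, IsCoprime β γ → ∃ β', IsCoprime β' γ ∧ (β' : ℚ) = β + s * γ)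
    (hx : x ∈ limsupApprox ψ S c) : iota r p s + x ∈ limsupApprox ψ S c := by
  have := iota_add_smulQ_mem_limsupApprox (q := 1) (Nat.coprime_one_left _) (by simpa using h) hx
  simpa [smulQ] using this

lemma diagPeriodic_limsupApprox : DiagPeriodic (limsupApprox ψ S c) := fun a ha _ hx =>
  iota_add_mem_limsupApprox (fun γ _ β hβ =>
    ⟨β + ⟨a, ha⟩ * γ, hβ.add_mul_right_left ⟨a, ha⟩, by simp⟩) hx

lemma iota_div_add_mem_limsupApprox_sq_dvd (hq0 : q ≠ 0) {a : ℚ} (ha : a ∈ PinvZ r p)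
    (hx : x ∈ limsupApprox ψ {γ | (q : pinvSubring p) * q ∣ γ} c) :
    iota r p (a / q) + x ∈ limsupApprox ψ {γ | (q : pinvSubring p) * q ∣ γ} c := by
  refine iota_add_mem_limsupApprox ?_ hx
  rintro _ ⟨γ, rfl⟩ β hβ
  rw [mul_assoc] at hβ ⊢
  refine ⟨_, isCoprime_add_mul_mul_mul_self hβ ⟨a, ha⟩, ?_⟩
  have : (q : ℚ) ≠ 0 := Nat.cast_ne_zero.2 hq0
  push_cast
  field_simp

lemma tendsto_div_abs_zero (hψ : ∀ γ ∈ PinvZ r p, γ ≠ 0 → ψ γ ≤ C * (|(γ : ℝ)| / content p γ)) :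
    Tendsto (fun γ : pinvSubring p => ψ γ / |(γ : ℝ)|)
      (contentAtTop p ⊓ 𝓟 {γ | 0 ≤ ψ γ}) (𝓝 0) := by
  have hlim : Tendsto (fun γ : pinvSubring p => C / content p γ) (contentAtTop p) (𝓝 0) :=
    tendsto_content_contentAtTop.const_div_atTop C
  refine squeeze_zero' ?_ ?_ (hlim.mono_left inf_le_left)
  · filter_upwards [mem_inf_of_right (mem_principal_self _)] with γ hγ
    exact div_nonneg hγ (abs_nonneg _)
  · filter_upwards [(eventually_contentAtTop_ne 0).filter_mono inf_le_left] with γ hγ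
    have hγ0 : (γ : ℚ) ≠ 0 := by simpa using hγ
    have hpos : (0 : ℝ) < |((γ : ℚ) : ℝ)| := by positivity
    rw [div_le_iff₀ hpos, div_mul_eq_mul_div, mul_div_assoc]
    exact hψ γ γ.2 hγ0

lemma abs_mul_sub_le_iff {β γ : ℚ} (hγ : γ ≠ 0) {t : ℝ} :
    |γ * t - β| ≤ c * ψ γ ↔ dist t ((β : ℝ) / γ) ≤ c * (ψ γ / |(γ : ℝ)|) := by
  have hγ' : (γ : ℝ) ≠ 0 := Rat.cast_ne_zero.2 hγ
  have heq : γ * t - β = γ * (t - β / γ) := by field_simp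
  rw [heq, abs_mul, Real.dist_eq, ← mul_div_assoc, le_div_iff₀ (abs_pos.2 hγ'), mul_comm]

/-- The filter of content tending to infinity on the coprime pairs `(β, γ)` with `γ ∈ S` that
satisfy the `p`-adic conditions of `approxBox` at `y`. Requiring `0 ≤ ψ γ` keeps the real radii
nonnegative when there are no `p`-adic conditions. -/
noncomputable def fiberFilter (ψ : ℚ → ℝ) (S : Set (pinvSubring p)) (y : (i : Fin r) → ℚ_[p i]) :
    Filter (pinvSubring p × pinvSubring p) :=
  comap Prod.snd (contentAtTop p ⊓ 𝓟 {γ | 0 ≤ ψ γ}) ⊓ 𝓟 {bg | bg.2 ∈ S ∧ IsCoprime bg.1 bg.2 ∧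
    ∀ i, ‖((bg.2 : ℚ) : ℚ_[p i]) * y i - (bg.1 : ℚ)‖ ≤ ψ bg.2}

instance (y : (i : Fin r) → ℚ_[p i]) : (fiberFilter ψ S y).IsCountablyGenerated := by
  unfold fiberFilter
  infer_instance

lemma tendsto_snd_fiberFilter (y : (i : Fin r) → ℚ_[p i]) :
    Tendsto Prod.snd (fiberFilter ψ S y) (contentAtTop p ⊓ 𝓟 {γ | 0 ≤ ψ γ}) :=
  tendsto_comap.mono_left inf_le_left

lemma mk_mem_limsupApprox_iff (hc : 0 < c) {t : ℝ} {y : (i : Fin r) → ℚ_[p i]} :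
    (t, y) ∈ limsupApprox ψ S c ↔ ∃ᶠ bg in fiberFilter ψ S y,
      dist t ((bg.1 : ℚ) / (bg.2 : ℚ)) ≤ c * (ψ bg.2 / |((bg.2 : ℚ) : ℝ)|) := by
  rw [fiberFilter, frequently_inf_principal, frequently_comap, frequently_inf_principal]
  refine frequently_congr ?_
  filter_upwards [eventually_contentAtTop_ne 0] with γ hγ
  replace hγ : (γ : ℚ) ≠ 0 := by simpa using hγ
  constructor
  · rintro ⟨hγS, β, hβ, hreal, hpadic⟩
    have hψ0 : 0 ≤ ψ γ := nonneg_of_mul_nonneg_right ((abs_nonneg _).trans hreal) hc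
    exact ⟨hψ0, (β, γ), rfl, ⟨hγS, hβ, hpadic⟩, (abs_mul_sub_le_iff hγ).1 hreal⟩
  · rintro ⟨-, ⟨β, _⟩, rfl, ⟨hγS, hβ, hpadic⟩, hreal⟩
    exact ⟨hγS, β, hβ, (abs_mul_sub_le_iff hγ).2 hreal, hpadic⟩

lemma ae_mem_limsupApprox_one_of_mem
    (hψ : ∀ γ ∈ PinvZ r p, γ ≠ 0 → ψ γ ≤ C * (|(γ : ℝ)| / content p γ)) (hc : 1 ≤ c) :
    ∀ᵐ x ∂lamP r p, x ∈ limsupApprox ψ S c → x ∈ limsupApprox ψ S 1 := by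
  have hm : MeasurableSet (limsupApprox ψ S c \ limsupApprox ψ S 1) :=
    measurableSet_limsupApprox.diff measurableSet_limsupApprox
  have hnull : lamP r p (limsupApprox ψ S c \ limsupApprox ψ S 1) = 0 := by
    rw [lamP, Measure.prod_apply_symm hm]
    refine (lintegral_congr fun y => ?_).trans lintegral_zero
    have hρ := (tendsto_div_abs_zero hψ).comp (tendsto_snd_fiberFilter (S := S) y)
    refine measure_mono_null ?_ (ae_frequently_dist_le_of_frequently_dist_le_mul volume
      (b := fun bg => ((bg.1 : ℚ) / (bg.2 : ℚ) : ℝ)) hρ hc)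
    rintro t ⟨hmem, hnot⟩
    rw [mk_mem_limsupApprox_iff (one_pos.trans_le hc)] at hmem
    rw [mk_mem_limsupApprox_iff one_pos] at hnot
    simp only [one_mul] at hnot
    exact Classical.not_imp.2 ⟨hmem, hnot⟩
  refine measure_mono_null (fun x hx => ?_) hnull
  exact Classical.not_imp.1 hx

lemma eventuallyConst_limsupApprox_of_affine (hinj : Function.Injective p)
    (hψ : ∀ γ ∈ PinvZ r p, γ ≠ 0 → ψ γ ≤ C * (|(γ : ℝ)| / content p γ))
    (hq1 : 1 < q) (hq : q.Coprime (primeProd p))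
    (h : ∀ γ ∈ S, ∀ β, IsCoprime β γ → ∃ β', IsCoprime β' γ ∧ (β' : ℚ) = q * β + s * γ) :
    EventuallyConst (limsupApprox ψ S 1) (ae (lamP r p)) := by
  set U := ⋃ k : ℕ, limsupApprox ψ S ((q : ℝ) ^ k)
  have hU : DiagPeriodic U := fun a ha x hx => by
    obtain ⟨k, hk⟩ := mem_iUnion.1 hx
    exact mem_iUnion.2 ⟨k, diagPeriodic_limsupApprox a ha x hk⟩
  have hUm : MeasurableSet U := .iUnion fun k => measurableSet_limsupApprox
  have hUq : ∀ x ∈ U, iota r p s + smulQ r p q x ∈ U := fun x hx => by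
    obtain ⟨k, hk⟩ := mem_iUnion.1 hx
    refine mem_iUnion.2 ⟨k + 1, ?_⟩
    rw [pow_succ']
    exact iota_add_smulQ_mem_limsupApprox hq h hk
  refine (hU.eventuallyConst_of_iota_add_smulQ_mem hinj hUm hq1 hq hUq).congr
    (eventuallyEq_set.2 ?_)
  have hle (k : ℕ) := ae_mem_limsupApprox_one_of_mem (S := S) hψ
    (one_le_pow₀ (n := k) (Nat.one_le_cast.2 hq1.le))
  filter_upwards [ae_all_iff.2 hle] with x hx
  refine ⟨fun hxU => ?_, fun hx1 => mem_iUnion.2 ⟨0, by rwa [pow_zero]⟩⟩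
  obtain ⟨k, hk⟩ := mem_iUnion.1 hxU
  exact hx k hk

lemma eventuallyConst_limsupApprox_not_dvd (hinj : Function.Injective p)
    (hψ : ∀ γ ∈ PinvZ r p, γ ≠ 0 → ψ γ ≤ C * (|(γ : ℝ)| / content p γ))
    (hq : q.Prime) (hqp : q.Coprime (primeProd p)) :
    EventuallyConst (limsupApprox ψ {γ | ¬ (q : pinvSubring p) ∣ γ} 1) (ae (lamP r p)) := by
  refine eventuallyConst_limsupApprox_of_affine (s := 0) hinj hψ hq.one_lt hqp ?_
  intro γ hγ β hβ
  exact ⟨q * β, (isCoprime_prime_of_not_dvd hq hγ).mul_left hβ, by simp⟩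

lemma eventuallyConst_limsupApprox_dvd_not_sq_dvd (hinj : Function.Injective p)
    (hψ : ∀ γ ∈ PinvZ r p, γ ≠ 0 → ψ γ ≤ C * (|(γ : ℝ)| / content p γ))
    (hq : q.Prime) (hqp : q.Coprime (primeProd p)) :
    EventuallyConst (limsupApprox ψ {γ | (q : pinvSubring p) ∣ γ ∧ ¬ (q : pinvSubring p) * q ∣ γ} 1)
      (ae (lamP r p)) := by
  refine eventuallyConst_limsupApprox_of_affine (s := 1 / q) hinj hψ hq.one_lt hqp ?_
  rintro _ ⟨⟨γ, rfl⟩, hγ⟩ β hβ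
  have hcop := isCoprime_prime_of_not_dvd hq fun h => hγ (mul_dvd_mul_left _ h)
  have hq0 : (q : ℚ) ≠ 0 := Nat.cast_ne_zero.2 hq.ne_zero
  refine ⟨_, isCoprime_mul_add_mul_self hβ hcop, ?_⟩
  push_cast
  field_simp

/-- The argument of Gallagher: if for no prime `q` the denominators divisible by `q` at most once
give a conull set, then those divisible by `q²` suffice almost everywhere, and these are invariant
under translation by `ι(q⁻¹P⁻¹ℤ)`. -/
theorem eventuallyConst_limsupApprox_univ (hinj : Function.Injective p)
    (hψ : ∀ γ ∈ PinvZ r p, γ ≠ 0 → ψ γ ≤ C * (|(γ : ℝ)| / content p γ)) :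
    EventuallyConst (limsupApprox ψ univ 1) (ae (lamP r p)) := by
  by_cases hfull : ∀ᵐ x ∂lamP r p, x ∈ limsupApprox ψ univ 1
  · exact eventuallyConst_set.2 (.inl hfull)
  have hnull {S : Set (pinvSubring p)} (hS : EventuallyConst (limsupApprox ψ S 1) (ae (lamP r p))) :
      ∀ᵐ x ∂lamP r p, x ∉ limsupApprox ψ S 1 :=
    (eventuallyConst_set.1 hS).resolve_left fun h =>
      hfull (h.mono fun x hx => limsupApprox_mono (subset_univ S) hx)
  have hsq {q : ℕ} (hq : q.Prime) (hqp : q.Coprime (primeProd p)) : ∀ᵐ x ∂lamP r p,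
      x ∈ limsupApprox ψ univ 1 → x ∈ limsupApprox ψ {γ | (q : pinvSubring p) * q ∣ γ} 1 := by
    have hsplit : (univ : Set (pinvSubring p)) = {γ | ¬ (q : pinvSubring p) ∣ γ} ∪
        {γ | (q : pinvSubring p) ∣ γ ∧ ¬ (q : pinvSubring p) * q ∣ γ} ∪
        {γ | (q : pinvSubring p) * q ∣ γ} := by
      ext γ
      simp only [mem_univ, mem_union, mem_ofPred_eq, true_iff]
      tauto
    filter_upwards [hnull (eventuallyConst_limsupApprox_not_dvd hinj hψ hq hqp),
      hnull (eventuallyConst_limsupApprox_dvd_not_sq_dvd hinj hψ hq hqp)] with x h0 h1 hx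
    rw [hsplit, limsupApprox_union, limsupApprox_union] at hx
    exact hx.resolve_left (not_or.2 ⟨h0, h1⟩)
  refine eventuallyConst_ae_of_dense_add_mem_imp measurableSet_limsupApprox
    (dense_setOf_iota_div (𝒟 := {q | q.Prime ∧ q.Coprime (primeProd p)}) hinj (fun q h => h.2)
      infinite_setOf_prime_coprime_primeProd) ?_
  rintro _ ⟨q, ⟨hq, hqp⟩, a, ha, rfl⟩
  have htrans := measurePreserving_add_left (lamP r p) (iota r p (a / q))
  filter_upwards [htrans.quasiMeasurePreserving.ae (hsq hq hqp)] with x hx hax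
  have hneg : -a ∈ pinvSubring p := neg_mem ha
  have := iota_div_add_mem_limsupApprox_sq_dvd hq.ne_zero hneg (hx hax)
  rw [neg_div, iota_neg, neg_add_cancel_left] at this
  exact limsupApprox_mono (subset_univ _) this

end LimsupApproximation

section ZeroOneLaw

variable {r : ℕ} {p : Fin r → ℕ} [∀ i, Fact (p i).Prime] {ψ : ℚ → ℝ} {C : ℝ} {β γ z : ℚ}
  {x : QP r p}

lemma dP_smulQ_iota_le_iff :
    dP r p (smulQ r p γ x) (iota r p β) ≤ ψ γ ↔ x ∈ approxBox ψ 1 β γ := by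
  simp only [dP, smulQ, iota, approxBox, mem_ofPred_eq, one_mul, max_le_iff]
  refine and_congr_right fun hreal => ?_
  exact ⟨fun h i => (le_ciSup (finite_range _).bddAbove i).trans h,
    fun h => Real.iSup_le h ((abs_nonneg _).trans hreal)⟩

lemma mem_approxBox_mul_iff : x ∈ approxBox ψ 1 (z * γ) γ ↔
    |(γ : ℝ)| * |x.1 - z| ≤ ψ γ ∧ ∀ i, ‖(γ : ℚ_[p i])‖ * ‖x.2 i - z‖ ≤ ψ γ := by
  simp only [approxBox, mem_ofPred_eq, one_mul, ← abs_mul, ← norm_mul, mul_sub]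
  push_cast
  simp only [mul_comm (z : ℝ), mul_comm (z : ℚ_[p _])]

lemma div_LP_le (hγ0 : γ ≠ 0) {t : ℝ} (ht : 0 < t) (h : content p γ / t ≤ LP r p γ) :
    C / LP r p γ ≤ |C| * (t / content p γ) := by
  have hpos : 0 < content p γ := content_pos hγ0
  calc C / LP r p γ ≤ |C| / (content p γ / t) := by
        gcongr
        exact le_abs_self C
    _ = |C| * (t / content p γ) := by rw [div_div_eq_mul_div, mul_div_assoc]

lemma div_LP_le_abs (hγ0 : γ ≠ 0) : C / LP r p γ ≤ |C| * (|(γ : ℝ)| / content p γ) :=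
  div_LP_le hγ0 (abs_pos.2 (Rat.cast_ne_zero.2 hγ0)) (le_max_left _ _)

lemma div_LP_le_norm (hγ0 : γ ≠ 0) (i : Fin r) :
    C / LP r p γ ≤ |C| * (‖(γ : ℚ_[p i])‖ / content p γ) := by
  refine div_LP_le hγ0 (norm_pos_iff.2 (Rat.cast_ne_zero.2 hγ0)) (le_max_of_le_right ?_)
  exact le_ciSup (f := fun i => content p γ / ‖(γ : ℚ_[p i])‖) (finite_range _).bddAbove i

lemma contentAtTop_le_cofinite : contentAtTop p ≤ cofinite :=
  le_cofinite_iff_eventually_ne.2 eventually_contentAtTop_ne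

lemma mem_Epsi_of_mem_limsupApprox (hinj : Function.Injective p) (hxZ : x ∈ ZP r p)
    (hx : x ∈ limsupApprox ψ univ 1) : x ∈ Epsi r p ψ := by
  refine ⟨hxZ, .of_image Prod.snd ?_⟩
  have hnonunit : ∀ᶠ γ : pinvSubring p in contentAtTop p, ¬ IsUnit γ := by
    filter_upwards [tendsto_content_contentAtTop.eventually_gt_atTop 1] with γ hγ hu
    exact (content_le_one_of_isUnit hinj hu).not_gt hγ
  have hfreq := (hx.and_eventually (hnonunit.and (eventually_contentAtTop_ne 0))).filter_mono
    contentAtTop_le_cofinite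
  refine ((frequently_cofinite_iff_infinite.1 hfreq).image
    Subtype.val_injective.injOn).mono ?_
  rintro _ ⟨γ, ⟨⟨-, β, hβ, hbox⟩, hu, hγ0⟩, rfl⟩
  have hβ0 : β ≠ 0 := by
    rintro rfl
    exact hu (isCoprime_zero_left.1 hβ)
  exact ⟨(β, γ), ⟨β.2, γ.2, coprimePair_of_isCoprime hinj hβ0 hγ0 hβ,
    dP_smulQ_iota_le_iff.2 hbox⟩, rfl⟩

lemma le_of_le_mul_div_content (hinj : Function.Injective p) (hC : 0 ≤ C) {t : ℝ}
    (hγ : γ ∈ PinvZ r p) (hγ0 : γ ≠ 0) (hreal : t ≤ C * (|(γ : ℝ)| / content p γ))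
    (hpadic : ∀ i, t ≤ C * (‖(γ : ℚ_[p i])‖ / content p γ)) : t ≤ C := by
  by_contra! ht
  have hone := one_le_content hinj hγ hγ0
  have hlt {s : ℝ} (h : t ≤ C * (s / content p γ)) : content p γ < s := by
    by_contra! hs
    exact (ht.trans_le h).not_ge
      (mul_le_of_le_one_right hC ((div_le_one (one_pos.trans_le hone)).2 hs))
  have hprod : 1 ≤ ∏ i, ‖(γ : ℚ_[p i])‖ :=
    Finset.one_le_prod fun i _ => hone.trans (hlt (hpadic i)).le
  exact (hlt hreal).not_ge (le_mul_of_one_le_right (abs_nonneg _) hprod)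

lemma norm_sub_le_of_mem_approxBox (hinj : Function.Injective p) (hC : 0 ≤ C)
    (hγ : γ ∈ PinvZ r p) (hγ0 : γ ≠ 0) (hreal : ψ γ ≤ C * (|(γ : ℝ)| / content p γ))
    (hpadic : ∀ i, ψ γ ≤ C * (‖(γ : ℚ_[p i])‖ / content p γ))
    (hx : x ∈ approxBox ψ 1 (z * γ) γ) : |x.1 - z| ≤ C ∧ ∀ i, ‖x.2 i - z‖ ≤ C := by
  have hone := one_le_content hinj hγ hγ0
  have hle {s d : ℝ} (hs : 0 < s) (hd : s * d ≤ ψ γ) (h : ψ γ ≤ C * (s / content p γ)) :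
      d ≤ C := by
    refine le_of_mul_le_mul_left ?_ hs
    calc s * d ≤ C * (s / content p γ) := hd.trans h
      _ ≤ C * s := by gcongr; exact div_le_self hs.le hone
      _ = s * C := mul_comm _ _
  rw [mem_approxBox_mul_iff] at hx
  exact ⟨hle (abs_pos.2 (Rat.cast_ne_zero.2 hγ0)) hx.1 hreal,
    fun i => hle (norm_pos_iff.2 (Rat.cast_ne_zero.2 hγ0)) (hx.2 i) (hpadic i)⟩

section Finiteness

variable (hinj : Function.Injective p) (hC : 0 ≤ C)
  (hreal : ∀ γ ∈ PinvZ r p, γ ≠ 0 → ψ γ ≤ C * (|(γ : ℝ)| / content p γ))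
  (hpadic : ∀ γ ∈ PinvZ r p, γ ≠ 0 → ∀ i, ψ γ ≤ C * (‖(γ : ℚ_[p i])‖ / content p γ))

include hinj hC hreal hpadic

lemma finite_setOf_mem_approxBox_mul (hx : x.1 ≠ z ∧ ∀ i, x.2 i ≠ z) :
    {γ | γ ∈ PinvZ r p ∧ γ ≠ 0 ∧ x ∈ approxBox ψ 1 (z * γ) γ}.Finite := by
  refine (finite_setOf_mem_PinvZ_norm_le (p := p) (C / |x.1 - z|)
    fun i => C / ‖x.2 i - z‖).subset ?_
  rintro γ ⟨hγ, hγ0, hbox⟩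
  rw [mem_approxBox_mul_iff] at hbox
  have hψC := le_of_le_mul_div_content hinj hC hγ hγ0 (hreal γ hγ hγ0) (hpadic γ hγ hγ0)
  refine ⟨hγ, (le_div_iff₀ (abs_pos.2 (sub_ne_zero.2 hx.1))).2 (hbox.1.trans hψC), fun i => ?_⟩
  exact (le_div_iff₀ (norm_pos_iff.2 (sub_ne_zero.2 (hx.2 i)))).2 ((hbox.2 i).trans hψC)

lemma finite_setOf_content_le_ratio (x : QP r p) (N : ℕ) :
    {z : ℚ | ∃ γ ∈ PinvZ r p, γ ≠ 0 ∧ z * γ ∈ PinvZ r p ∧ content p γ ≤ N ∧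
      x ∈ approxBox ψ 1 (z * γ) γ}.Finite := by
  have hN0 : (N.factorial : ℚ) ≠ 0 := Nat.cast_ne_zero.2 N.factorial_ne_zero
  refine ((finite_setOf_mem_PinvZ_norm_le (p := p) (N.factorial * (C + |x.1|))
    fun i => C + ‖x.2 i‖).preimage (mul_right_injective₀ hN0).injOn).subset ?_
  rintro z ⟨γ, hγ, hγ0, hzγ, hcont, hbox⟩
  obtain ⟨hz, hzi⟩ := norm_sub_le_of_mem_approxBox hinj hC hγ hγ0 (hreal γ hγ hγ0)
    (hpadic γ hγ hγ0) hbox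
  refine ⟨?_, ?_, fun i => ?_⟩
  · obtain ⟨⟨δ, hδ⟩, hmul⟩ := dvd_factorial_of_content_le (γ := ⟨γ, hγ⟩) hinj
      (by simpa [Subtype.ext_iff] using hγ0) hcont
    have hfac : (N.factorial : ℚ) = γ * δ := by
      have := congrArg Subtype.val hmul
      push_cast at this
      exact this
    have hmem : z * γ * δ ∈ pinvSubring p := mul_mem hzγ hδ
    rwa [mul_assoc, ← hfac, mul_comm] at hmem
  · push_cast
    rw [abs_mul, Nat.abs_cast]
    gcongr
    have := abs_sub_abs_le_abs_sub (z : ℝ) x.1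
    rw [abs_sub_comm] at this
    linarith
  · push_cast
    rw [norm_mul]
    have hfac : ‖((N.factorial : ℕ) : ℚ_[p i])‖ ≤ 1 := by
      exact_mod_cast Padic.norm_int_le_one N.factorial
    refine (mul_le_of_le_one_left (norm_nonneg _) hfac).trans ?_
    have := norm_sub_norm_le (z : ℚ_[p i]) (x.2 i)
    rw [norm_sub_rev] at this
    linarith [hzi i]

lemma finite_setOf_content_le_mem_approxBox (hx : ∀ z : ℚ, x.1 ≠ z ∧ ∀ i, x.2 i ≠ z) (N : ℕ) :
    {bg : ℚ × ℚ | bg.1 ∈ PinvZ r p ∧ bg.2 ∈ PinvZ r p ∧ content p bg.2 ≤ N ∧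
      x ∈ approxBox ψ 1 bg.1 bg.2}.Finite := by
  have hzero := (finite_setOf_mem_PinvZ_norm_le (p := p) (ψ 0) fun _ => ψ 0).image (·, (0 : ℚ))
  have hratio := finite_setOf_content_le_ratio hinj hC hreal hpadic x N
  have hne := hratio.biUnion fun z _ =>
    (finite_setOf_mem_approxBox_mul hinj hC hreal hpadic (hx z)).image fun γ => (z * γ, γ)
  refine (hzero.union hne).subset ?_
  rintro ⟨β, γ⟩ ⟨hβ, hγ, hcont, hbox⟩
  rcases eq_or_ne γ 0 with rfl | hγ0
  · refine .inl ⟨β, ⟨hβ, ?_⟩, rfl⟩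
    simpa [approxBox] using hbox
  · obtain ⟨z, rfl⟩ : ∃ z, β = z * γ := ⟨β / γ, (div_mul_cancel₀ β hγ0).symm⟩
    exact .inr (mem_iUnion₂.2 ⟨z, ⟨γ, hγ, hγ0, hβ, hcont, hbox⟩, γ, ⟨hγ, hγ0, hbox⟩, rfl⟩)

lemma ae_mem_limsupApprox_of_mem_Epsi :
    ∀ᵐ x ∂lamP r p, x ∈ Epsi r p ψ → x ∈ limsupApprox ψ univ 1 := by
  filter_upwards [ae_ne_ratCast] with x hx hE
  by_contra hW
  obtain ⟨N, hN⟩ : ∃ N : ℕ, ∀ γ : pinvSubring p, N < content p γ →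
      ¬ ∃ β : pinvSubring p, IsCoprime β γ ∧ x ∈ approxBox ψ 1 β γ := by
    obtain ⟨M, hM⟩ := (atTop_basis_Ioi.comap fun γ : pinvSubring p => content p γ).eventually_iff.1
      (not_frequently.1 hW)
    obtain ⟨N, hMN⟩ := exists_nat_ge M
    exact ⟨N, fun γ hγ h => hM.2 (hMN.trans_lt hγ) ⟨mem_univ _, h⟩⟩
  refine hE.2 ((finite_setOf_content_le_mem_approxBox hinj hC hreal hpadic hx N).subset ?_)
  rintro ⟨β, γ⟩ ⟨hβ, hγ, hcop, hd⟩
  refine ⟨hβ, hγ, not_lt.1 fun hlt => hN ⟨γ, hγ⟩ hlt ⟨⟨β, hβ⟩, ?_⟩, dP_smulQ_iota_le_iff.1 hd⟩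
  exact ⟨CoprimePair.isCoprime (β := ⟨β, hβ⟩) (γ := ⟨γ, hγ⟩) hcop, dP_smulQ_iota_le_iff.1 hd⟩

end Finiteness

end ZeroOneLaw

theorem diagonal_zero_one_law_general {r : ℕ} {p : Fin r → ℕ} [∀ i, Fact (p i).Prime]
    (hinj : Function.Injective p) {ψ : ℚ → ℝ} {C : ℝ}
    (hψ : ∀ γ ∈ PinvZ r p, γ ≠ 0 → ψ γ ≤ C / LP r p γ) :
    lamP r p (Epsi r p ψ) = 0 ∨ lamP r p (Epsi r p ψ) = 1 := by
  have hreal : ∀ γ ∈ PinvZ r p, γ ≠ 0 → ψ γ ≤ |C| * (|(γ : ℝ)| / content p γ) :=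
    fun γ hγ hγ0 => (hψ γ hγ hγ0).trans (div_LP_le_abs hγ0)
  have hpadic : ∀ γ ∈ PinvZ r p, γ ≠ 0 → ∀ i, ψ γ ≤ |C| * (‖(γ : ℚ_[p i])‖ / content p γ) :=
    fun γ hγ hγ0 i => (hψ γ hγ hγ0).trans (div_LP_le_norm hγ0 i)
  rcases eventuallyConst_set.1 (eventuallyConst_limsupApprox_univ hinj hreal) with hfull | hnull
  · right
    refine (measure_congr (eventuallyEq_set.2 ?_)).trans (lamP_ZP (p := p))
    filter_upwards [hfull] with x hx
    exact ⟨And.left, fun hxZ => mem_Epsi_of_mem_limsupApprox hinj hxZ hx⟩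
  · left
    refine measure_eq_zero_iff_ae_notMem.2 ?_
    filter_upwards [hnull, ae_mem_limsupApprox_of_mem_Epsi hinj (abs_nonneg C) hreal hpadic]
      with x hx hE
    exact fun h => hx (hE h)

/-- **The zero-one law.** For `ψ : P⁻¹ℤ → ℝ_{≥0}` with `ψ(γ) ≤ 1/(2L(γ))`, the set `ℰ(ψ)`
of `x ∈ ℤ_P` with `d(γ·x, ι(β)) ≤ ψ(γ)` for infinitely many coprime pairs `β, γ ∈ P⁻¹ℤ`
has measure `0` or `1`. -/
theorem diagonal_zero_one_law (r : ℕ) (p : Fin r → ℕ)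
    [∀ i, Fact (p i).Prime] (hinj : Function.Injective p)
    (ψ : ℚ → ℝ) (hψ0 : ∀ γ, 0 ≤ ψ γ) (hψL : ∀ γ, ψ γ ≤ 1 / (2 * LP r p γ)) :
    lamP r p (Epsi r p ψ) = 0 ∨ lamP r p (Epsi r p ψ) = 1 :=
  diagonal_zero_one_law_general hinj fun γ _ _ => (hψL γ).trans_eq (div_div 1 2 _).symm
end

section
/- Let N ∈ ℕ, and for each i = 1, …, r let n_i ∈ ℤ_{≥0} be the integer with p_i^{n_i} ≤ N < p_i^{n_i + 1}. Then the set Z_N = { ζ ∈ P⁻¹ℤ : ℓ(ζ) ≤ N, ζ ≥ 0 } has cardinality #Z_N = N p_1^{n_1} ⋯ p_r^{n_r} + 1. -/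
open MeasureTheory Filter Set

/-!
An element of `P⁻¹ℤ` is automatically `q`-integral at every prime `q ∉ P`. As `|ζ|_p` takes only
powers of `p` and `0` as values, `|ζ|_{p_i} ≤ N` means `|ζ|_{p_i} ≤ p_i^{n_i}`, that is, `ζ D` is
`p_i`-integral for `D = p_1^{n_1} ⋯ p_r^{n_r}`. A rational number that is integral at all primes is
an integer, so the condition at the finite places cuts out the lattice `D⁻¹ℤ`, and the remaining
condition `0 ≤ ζ ≤ N` selects `ζ = k / D` with `0 ≤ k ≤ N D`.
-/

theorem rat_den_eq_one_of_forall_padic_norm_le_one {x : ℚ}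
    (hx : ∀ (q : ℕ) [Fact q.Prime], ‖(x : ℚ_[q])‖ ≤ 1) : x.den = 1 := by
  refine Nat.eq_one_iff_not_exists_prime_dvd.2 fun q hq hdvd => ?_
  have : Fact q.Prime := ⟨hq⟩
  have hunit : ‖(x.den : ℤ_[q])‖ = 1 := PadicInt.isUnit_iff.1 (PadicInt.isUnit_den x (hx q))
  have hcop : q.Coprime x.den := PadicInt.norm_natCast_eq_one_iff.1 hunit
  exact hq.coprime_iff_not_dvd.1 hcop hdvd

theorem padic_norm_le_iff_norm_le_zpow {q : ℕ} [Fact q.Prime] {n : ℤ} {c : ℝ}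
    (hle : (q : ℝ) ^ n ≤ c) (hlt : c < (q : ℝ) ^ (n + 1)) (x : ℚ_[q]) :
    ‖x‖ ≤ c ↔ ‖x‖ ≤ (q : ℝ) ^ n :=
  ⟨fun hx => (Padic.norm_le_pow_iff_norm_lt_pow_add_one x n).2 (hx.trans_lt hlt),
    fun hx => hx.trans hle⟩

section PrimeProducts

variable {ι : Type*} {s : Finset ι} {p : ι → ℕ} [∀ i, Fact (p i).Prime]

theorem padic_norm_prod_zpow_eq_one {q : ℕ} [Fact q.Prime] (hq : ∀ i ∈ s, p i ≠ q) (ν : ι → ℤ) :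
    ‖∏ i ∈ s, (p i : ℚ_[q]) ^ ν i‖ = 1 := by
  rw [norm_prod]
  refine Finset.prod_eq_one fun i hi => ?_
  have hcop : q.Coprime (p i) := (Nat.coprime_primes Fact.out Fact.out).2 (hq i hi).symm
  rw [norm_zpow, Padic.norm_natCast_eq_one_iff.2 hcop, one_zpow]

theorem padic_norm_prod_zpow_of_injOn (hp : InjOn p s) (ν : ι → ℤ) {j : ι} (hj : j ∈ s) :
    ‖∏ i ∈ s, (p i : ℚ_[p j]) ^ ν i‖ = (p j : ℝ) ^ (-ν j) := by
  classical
  have hne : ∀ i ∈ s.erase j, p i ≠ p j := fun i hi h =>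
    Finset.ne_of_mem_erase hi (hp (Finset.mem_of_mem_erase hi) hj h)
  rw [← Finset.mul_prod_erase s _ hj, norm_mul, Padic.norm_p_zpow,
    padic_norm_prod_zpow_eq_one hne, mul_one]

end PrimeProducts

theorem ncard_int_div_mem_Icc {K : Type*} [Field K] [LinearOrder K] [IsStrictOrderedRing K]
    [FloorSemiring K] {D M : K} (hD : 0 < D) (hM : 0 ≤ M) :
    {x : K | (∃ k : ℤ, x = k / D) ∧ 0 ≤ x ∧ x ≤ M}.ncard = ⌊M * D⌋₊ + 1 := by
  have himage : {x : K | (∃ k : ℤ, x = k / D) ∧ 0 ≤ x ∧ x ≤ M} =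
      (fun k : ℕ => (k : K) / D) '' (Finset.range (⌊M * D⌋₊ + 1)) := by
    ext x
    simp only [mem_ofPred_eq, mem_image, Finset.mem_coe, Finset.mem_range, Nat.lt_succ_iff,
      Nat.le_floor_iff (mul_nonneg hM hD.le), ← div_le_iff₀ hD]
    constructor
    · rintro ⟨⟨k, rfl⟩, hk0, hkM⟩
      have hk : 0 ≤ k := by simpa [div_nonneg_iff, hD.le, hD.not_ge] using hk0
      lift k to ℕ using hk
      exact ⟨k, by simpa using hkM, by simp⟩
    · rintro ⟨k, hkM, rfl⟩
      exact ⟨⟨k, by simp⟩, by positivity, hkM⟩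
  have hinj : Function.Injective fun k : ℕ => (k : K) / D := fun _ _ h =>
    Nat.cast_injective ((div_left_inj' hD.ne').1 h)
  rw [himage, ncard_image_of_injective _ hinj, ncard_coe_finset, Finset.card_range]

section Level

variable {r : ℕ} {p : Fin r → ℕ} [∀ i, Fact (p i).Prime]

theorem lev_le_iff {x : ℚ} {c : ℝ} :
    lev r p x ≤ c ↔ |(x : ℝ)| ≤ c ∧ ∀ i, ‖(x : ℚ_[p i])‖ ≤ c := by
  rw [lev, max_le_iff]
  refine and_congr_right fun hx => ⟨fun h i => ?_, fun h => ?_⟩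
  · exact (le_ciSup (finite_range fun i => ‖(x : ℚ_[p i])‖).bddAbove i).trans h
  · exact Real.iSup_le h ((abs_nonneg _).trans hx)

theorem padic_norm_le_one_of_mem_PinvZ {x : ℚ} (hx : x ∈ PinvZ r p) {q : ℕ} [Fact q.Prime]
    (hq : ∀ i, p i ≠ q) : ‖(x : ℚ_[q])‖ ≤ 1 := by
  obtain ⟨n, ν, rfl⟩ := hx
  push_cast
  rw [norm_mul, padic_norm_prod_zpow_eq_one (fun i _ => hq i), mul_one]
  exact Padic.norm_int_le_one n

theorem mem_PinvZ_and_norm_le_zpow_iff (hp : Function.Injective p) (n : Fin r → ℤ) {x : ℚ} :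
    (x ∈ PinvZ r p ∧ ∀ i, ‖(x : ℚ_[p i])‖ ≤ (p i : ℝ) ^ n i) ↔
      ∃ k : ℤ, x = k / ∏ i, (p i : ℚ) ^ n i := by
  have hp0 (i : Fin r) : p i ≠ 0 := (Fact.out : (p i).Prime).ne_zero
  have hnorm (i : Fin r) : ‖∏ j, (p j : ℚ_[p i]) ^ n j‖ = ((p i : ℝ) ^ n i)⁻¹ := by
    rw [padic_norm_prod_zpow_of_injOn hp.injOn n (Finset.mem_univ i), zpow_neg]
  have hpos (i : Fin r) : 0 < (p i : ℝ) ^ n i :=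
    zpow_pos (Nat.cast_pos.2 (hp0 i).bot_lt) _
  constructor
  · rintro ⟨hx, hxp⟩
    have hint : (x * ∏ i, (p i : ℚ) ^ n i).den = 1 := by
      refine rat_den_eq_one_of_forall_padic_norm_le_one fun q _ => ?_
      push_cast
      rw [norm_mul]
      by_cases hq : ∃ i, p i = q
      · obtain ⟨i, rfl⟩ := hq
        rw [hnorm, ← div_eq_mul_inv, div_le_one (hpos i)]
        exact hxp i
      · push Not at hq
        rw [padic_norm_prod_zpow_eq_one (fun i _ => hq i), mul_one]
        exact padic_norm_le_one_of_mem_PinvZ hx hq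
    refine ⟨_, eq_div_of_mul_eq ?_ ((Rat.den_eq_one_iff _).1 hint).symm⟩
    exact Finset.prod_ne_zero_iff.2 fun i _ => zpow_ne_zero _ (Nat.cast_ne_zero.2 (hp0 i))
  · rintro ⟨k, rfl⟩
    refine ⟨⟨k, -n, by simp [div_eq_mul_inv]⟩, fun i => ?_⟩
    push_cast
    rw [norm_div, hnorm, div_inv_eq_mul]
    exact mul_le_of_le_one_left (hpos i).le (Padic.norm_int_le_one k)

end Level

/-- **Counting points of bounded level.** For `N ∈ ℕ` and `n_i` with
`p_i^{n_i} ≤ N < p_i^{n_i+1}`, the set `Z_N = {ζ ∈ P⁻¹ℤ : ℓ(ζ) ≤ N, ζ ≥ 0}` has exactly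
`N p_1^{n_1} ⋯ p_r^{n_r} + 1` elements. -/
theorem card_level_le (r : ℕ) (p : Fin r → ℕ)
    [∀ i, Fact (p i).Prime] (hinj : Function.Injective p)
    (N : ℕ) (hN : 0 < N) (n' : Fin r → ℕ)
    (hn' : ∀ i, p i ^ (n' i) ≤ N ∧ N < p i ^ (n' i + 1)) :
    {ζ : ℚ | ζ ∈ PinvZ r p ∧ lev r p ζ ≤ (N : ℝ) ∧ 0 ≤ ζ}.ncard
      = N * ∏ i, p i ^ (n' i) + 1 := by
  have hlattice : {ζ : ℚ | ζ ∈ PinvZ r p ∧ lev r p ζ ≤ (N : ℝ) ∧ 0 ≤ ζ} =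
      {ζ : ℚ | (∃ k : ℤ, ζ = k / ∏ i, (p i : ℚ) ^ (n' i : ℤ)) ∧ 0 ≤ ζ ∧ ζ ≤ N} := by
    ext ζ
    have hfin (i : Fin r) : ‖(ζ : ℚ_[p i])‖ ≤ N ↔ ‖(ζ : ℚ_[p i])‖ ≤ (p i : ℝ) ^ (n' i : ℤ) :=
      padic_norm_le_iff_norm_le_zpow (mod_cast (hn' i).1) (mod_cast (hn' i).2) _
    have habs : 0 ≤ ζ → (|(ζ : ℝ)| ≤ N ↔ ζ ≤ N) := fun hζ => by
      rw [abs_of_nonneg (Rat.cast_nonneg.2 hζ)]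
      exact_mod_cast Iff.rfl
    simp only [mem_ofPred_eq, lev_le_iff, hfin, ← mem_PinvZ_and_norm_le_zpow_iff hinj]
    tauto
  have hD : (0 : ℚ) < ∏ i, (p i : ℚ) ^ (n' i : ℤ) :=
    Finset.prod_pos fun i _ => zpow_pos (Nat.cast_pos.2 (Fact.out : (p i).Prime).pos) _
  rw [hlattice, ncard_int_div_mem_Icc hD N.cast_nonneg]
  congr 1
  exact_mod_cast Nat.floor_natCast (R := ℚ) (N * ∏ i, p i ^ n' i)
end
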